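/- There exists a constant c > 0 such that for infinitely many natural numbers n there is a simple (non-weak) pseudoline arrangement (L₁, …, Lₙ) in ℝ² with the following property: for every homeomorphism h : ℝ² → ℝ² such that each set Cᵢ := h(Lᵢ) is a C¹-smooth one-dimensional submanifold of ℝ² that is a finite union of pieces, each piece being a circular arc, a line segment, or a closed ray, there is some index i such that Cᵢ cannot be written as a union of fewer than c·n such pieces. That is, there exist simple arrangements of n pseudolines that, when represented by smooth piecewise-circular curves, require some curve to consist of Ω(n) arcs. -/

import Mathlib

open Set

/-- The Euclidean plane. -/
abbrev Plane := EuclideanSpace ℝ (Fin 2)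

/-- A straight line in the plane. -/
def IsLine (S : Set Plane) : Prop :=
  ∃ a u : Plane, u ≠ 0 ∧ S = {p | ∃ t : ℝ, p = a + t • u}

/-- A pseudoline: image of a straight line under a self-homeomorphism of the plane. -/
def IsPseudoline (L : Set Plane) : Prop :=
  ∃ (h : Plane ≃ₜ Plane) (ℓ : Set Plane), IsLine ℓ ∧ L = h '' ℓ

/-- Two curves cross at `p`: `p` lies on both, and each of them meets every
connected component of the complement of the other. -/
def CrossAt (L M : Set Plane) (p : Plane) : Prop :=
  p ∈ L ∩ M ∧
  (∀ x ∈ Mᶜ, (L ∩ connectedComponentIn Mᶜ x).Nonempty) ∧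
  (∀ x ∈ Lᶜ, (M ∩ connectedComponentIn Lᶜ x).Nonempty)

/-- A weak pseudoline arrangement: pairwise distinct pseudolines, any two of which
intersect in at most one point, and cross wherever they intersect. -/
def IsWeakArrangement {n : ℕ} (L : Fin n → Set Plane) : Prop :=
  Function.Injective L ∧
  (∀ i, IsPseudoline (L i)) ∧
  (∀ i j, i ≠ j → (L i ∩ L j).Subsingleton) ∧
  (∀ i j, i ≠ j → ∀ p ∈ L i ∩ L j, CrossAt (L i) (L j) p)

/-- A (non-weak) pseudoline arrangement: a weak arrangement in which any two
pseudolines intersect (in exactly one point, where they cross). -/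
def IsArrangement {n : ℕ} (L : Fin n → Set Plane) : Prop :=
  IsWeakArrangement L ∧ ∀ i j, i ≠ j → (L i ∩ L j).Nonempty

/-- Simplicity: no point lies on three distinct pseudolines of the family. -/
def IsSimple {n : ℕ} (L : Fin n → Set Plane) : Prop :=
  ∀ (p : Plane) (i j k : Fin n),
    p ∈ L i → p ∈ L j → p ∈ L k → i = j ∨ i = k ∨ j = k

/-- Outerplanarity: every intersection point of two pseudolines of the family lies
in the closure of some unbounded connected component of the complement of the union. -/
def IsOuterplanar {n : ℕ} (L : Fin n → Set Plane) : Prop :=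
  ∀ i j, i ≠ j → ∀ p ∈ L i ∩ L j,
    ∃ x ∈ (⋃ k, L k)ᶜ,
      ¬ Bornology.IsBounded (connectedComponentIn (⋃ k, L k)ᶜ x) ∧
      p ∈ closure (connectedComponentIn (⋃ k, L k)ᶜ x)

/-- A closed ray in the plane. -/
def IsRay (R : Set Plane) : Prop :=
  ∃ a u : Plane, u ≠ 0 ∧ R = {p | ∃ t : ℝ, 0 ≤ t ∧ p = a + t • u}

/-- A closed line segment in the plane. -/
def IsSegment (S : Set Plane) : Prop :=
  ∃ a b : Plane, S = segment ℝ a b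

/-- A circular arc: a nonempty connected subset of a circle. -/
def IsArc (A : Set Plane) : Prop :=
  ∃ (c : Plane) (r : ℝ), 0 < r ∧ A ⊆ Metric.sphere c r ∧ IsConnected A

/-- A `C¹`-smooth unbounded simple curve (a one-dimensional `C¹` submanifold of the
plane), presented as the range of an injective `C¹` immersion of `ℝ`. -/
def IsC1Curve (C : Set Plane) : Prop :=
  ∃ γ : ℝ → Plane, Function.Injective γ ∧ ContDiff ℝ 1 γ ∧
    (∀ t, deriv γ t ≠ 0) ∧ Set.range γ = C

/-- `C` can be written as a union of `m` pieces, each a circular arc, a line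
segment, or a closed ray. -/
def HasPieceDecomposition (C : Set Plane) (m : ℕ) : Prop :=
  ∃ P : Fin m → Set Plane,
    (∀ k, IsArc (P k) ∨ IsSegment (P k) ∨ IsRay (P k)) ∧ C = ⋃ k, P k

/-!
Perturb the lines `y = s x + t`, `0 ≤ s ≤ k + 1`, so that at every point `(m, y)` each line of slope
`s ≥ 2` through it passes on a prescribed side of the crossing of the lines of slopes `0` and `1`.
Suppose that within a window of `k` columns and `k²` rows every curve is drawn as a single circular
arc or line segment. Then the `k⁴` prescribed sides are determined by the signs of `O(k⁴)`
polynomials of bounded degree in the `O(k³)` coordinates of the arcs. By Warren's theorem there are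
at most `k ^ O(k³) < 2 ^ k⁴` sign patterns once `k` is large, so some prescription cannot be drawn.

Use this prescription periodically, in `M × M` windows of an arrangement of `O(M)` curves. However
the arrangement is drawn, each window contains a curve that is not a single arc over the columns of
the window. By the pigeonhole principle one curve is not a single arc over each of `Ω(M)` disjoint
blocks of columns; two of these blocks cannot begin on the same piece, because a piece is connected
and so would contain the whole of the first block.
-/

section Polynomials

open MvPolynomial Filter Topology

variable {σ : Type*}

theorem totalDegree_pderiv_le {R : Type*} [CommSemiring R] (i : σ) (p : MvPolynomial σ R) :
    (pderiv i p).totalDegree ≤ p.totalDegree := by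
  refine Finset.sup_le fun m hm => ?_
  have hcoeff : coeff (m + Finsupp.single i 1) p ≠ 0 := fun h => by
    simp [mem_support_iff, coeff_pderiv, h] at hm
  have hle := le_totalDegree (mem_support_iff.2 hcoeff)
  rw [Finsupp.sum_add_index' (fun _ => rfl) (fun _ _ _ => rfl)] at hle
  exact (Nat.le_add_right _ _).trans hle

theorem exists_eval_eq_single {B R : Type*} [Finite B] [DecidableEq B] [Field R]
    {z : B → σ → R} (hz : Function.Injective z) :
    ∃ p : B → MvPolynomial σ R, ∀ a b, eval (z b) (p a) = (Pi.single a 1 : B → R) b := by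
  have := Fintype.ofFinite B
  have h (a b : B) : ∃ l : MvPolynomial σ R, a ≠ b → eval (z a) l = 1 ∧ eval (z b) l = 0 := by
    by_cases hab : a = b
    · exact ⟨0, fun h => (h hab).elim⟩
    · obtain ⟨i, hi⟩ := Function.ne_iff.1 (hz.ne hab)
      exact ⟨C (z a i - z b i)⁻¹ * (X i - C (z b i)), fun _ => by simp [sub_ne_zero.2 hi]⟩
  choose l hl using h
  refine ⟨fun a => ∏ b ∈ Finset.univ.erase a, l a b, fun a b => ?_⟩
  rw [map_prod]
  obtain rfl | hab := eq_or_ne b a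
  · rw [Pi.single_eq_same]
    exact Finset.prod_eq_one fun b hb => (hl _ b (Finset.ne_of_mem_erase hb).symm).1
  · rw [Pi.single_eq_of_ne hab]
    exact Finset.prod_eq_zero (Finset.mem_erase.2 ⟨hab, Finset.mem_univ b⟩) (hl a b hab.symm).2

variable [Fintype σ]

theorem hasFDerivAt_eval (p : MvPolynomial σ ℝ) (x : σ → ℝ) :
    HasFDerivAt (fun y => eval y p)
      (∑ j, eval x (pderiv j p) • (ContinuousLinearMap.proj j : (σ → ℝ) →L[ℝ] ℝ)) x := by
  classical
  induction p using MvPolynomial.induction_on with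
  | C a =>
    simp only [eval_C, pderiv_C, map_zero, zero_smul, Finset.sum_const_zero]
    exact hasFDerivAt_const a x
  | add p q hp hq =>
    simp only [map_add, add_smul, Finset.sum_add_distrib]
    exact hp.add hq
  | mul_X p n hp =>
    have hX := (ContinuousLinearMap.proj n : (σ → ℝ) →L[ℝ] ℝ).hasFDerivAt (x := x)
    simp only [map_mul, eval_X]
    refine (hp.mul hX).congr_fderiv ?_
    ext w
    simp [pderiv_X, Pi.single_apply, apply_ite, Finset.sum_add_distrib, Finset.mul_sum, add_mul,
      mul_assoc]

/-- The Jacobian matrix at `z` of the system of polynomials `g`, with as many equations as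
variables. -/
noncomputable def jacobian (g : σ → MvPolynomial σ ℝ) (z : σ → ℝ) : Matrix σ σ ℝ :=
  Matrix.of fun i j => eval z (pderiv j (g i))

/-- A common zero of the square polynomial system `g` at which the Jacobian is invertible, so that
the equations are transversal there. -/
structure IsNondegenerateZero [DecidableEq σ] (g : σ → MvPolynomial σ ℝ) (z : σ → ℝ) : Prop where
  eval_eq_zero : ∀ i, eval z (g i) = 0
  isUnit_jacobian : IsUnit (jacobian g z)

/-- Each factor `g i` vanishes to first order along `τ ↦ z + τ w`, so only the products of exactly
`d` factors survive the division by `τ ^ d`. -/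
theorem tendsto_prod_pow_eval_line {g : σ → MvPolynomial σ ℝ} {z : σ → ℝ}
    (hz : ∀ i, eval z (g i) = 0) (w : σ → ℝ) {α : σ → ℕ} {d : ℕ} (hd : d ≤ ∑ i, α i) :
    Tendsto (fun τ : ℝ => (τ ^ d)⁻¹ * ∏ i, eval (z + τ • w) (g i) ^ α i) (𝓝[≠] 0)
      (𝓝 ((∏ i, (jacobian g z).mulVec w i ^ α i) * 0 ^ (∑ i, α i - d))) := by
  have hslope (i : σ) : Tendsto (fun τ : ℝ => τ⁻¹ * eval (z + τ • w) (g i)) (𝓝[≠] 0)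
      (𝓝 ((jacobian g z).mulVec w i)) := by
    have hline : HasDerivAt (fun τ : ℝ => z + τ • w) w 0 := by
      simpa using ((hasDerivAt_id (0 : ℝ)).smul_const w).const_add z
    have hderiv := (hasFDerivAt_eval (g i) (z + (0 : ℝ) • w)).comp_hasDerivAt 0 hline
    simpa [hz, jacobian, Matrix.mulVec, dotProduct] using hderiv.tendsto_slope_zero
  have hpow : Tendsto (fun τ : ℝ => τ ^ (∑ i, α i - d)) (𝓝[≠] 0) (𝓝 (0 ^ (∑ i, α i - d))) :=
    ((continuous_pow _).tendsto 0).mono_left nhdsWithin_le_nhds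
  refine ((tendsto_finsetProd _ fun i _ => (hslope i).pow (α i)).mul hpow).congr' ?_
  filter_upwards [self_mem_nhdsWithin] with τ hτ
  have hτ : τ ≠ 0 := hτ
  simp only [mul_pow, Finset.prod_mul_distrib, Finset.prod_pow_eq_pow_sum]
  rw [mul_right_comm, inv_pow, pow_sub₀ _ hτ hd]
  field_simp

theorem sum_leading_terms_eq_zero {ι : Type*} [Fintype ι] {g : σ → MvPolynomial σ ℝ}
    {z : σ → ℝ} (hz : ∀ i, eval z (g i) = 0) {α : ι → σ → ℕ} {p : ι → MvPolynomial σ ℝ}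
    {c : ι → ℝ} (hc : ∑ k, c k • ((∏ i, g i ^ α k i) * p k) = 0) {d : ℕ}
    (hd : ∀ k, c k ≠ 0 → d ≤ ∑ i, α k i) (w : σ → ℝ) :
    ∑ k, c k * ((∏ i, (jacobian g z).mulVec w i ^ α k i) * 0 ^ (∑ i, α k i - d) *
      eval z (p k)) = 0 := by
  refine tendsto_nhds_unique (f := fun τ : ℝ => (τ ^ d)⁻¹ *
    eval (z + τ • w) (∑ k, c k • ((∏ i, g i ^ α k i) * p k))) (l := 𝓝[≠] 0) ?_ (by simp [hc])
  have hp (k : ι) : Tendsto (fun τ : ℝ => eval (z + τ • w) (p k)) (𝓝[≠] 0) (𝓝 (eval z (p k))) := by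
    have : Continuous fun τ : ℝ => eval (z + τ • w) (p k) :=
      (continuous_eval (p k)).comp (by fun_prop)
    simpa using (this.tendsto 0).mono_left (nhdsWithin_le_nhds (s := {0}ᶜ))
  simp only [map_sum, smul_eval, map_mul, map_prod, map_pow, Finset.mul_sum]
  refine tendsto_finsetSum _ fun k _ => ?_
  by_cases hk : c k = 0
  · simp [hk]
  · refine (((tendsto_prod_pow_eval_line hz w (hd k hk)).mul (hp k)).const_mul (c k)).congr
      fun τ => ?_
    ring

theorem card_le_of_linearIndependent {ι R : Type*} [Fintype ι] [Field R]
    {G : ι → MvPolynomial σ R} (hG : LinearIndependent R G) {m : ℕ}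
    (hm : ∀ i, (G i).totalDegree ≤ m) : Fintype.card ι ≤ (m + 1) ^ Fintype.card σ := by
  have hmem (i : ι) : G i ∈ restrictDegree σ R m :=
    restrictTotalDegree_le_restrictDegree σ R m ((mem_restrictTotalDegree σ m _).2 (hm i))
  have hli : LinearIndependent R fun i => (⟨G i, hmem i⟩ : restrictDegree σ R m) :=
    LinearIndependent.of_comp (restrictDegree σ R m).subtype hG
  let exponents : {n : σ →₀ ℕ | ∀ i, n i ≤ m} ↪ (σ → Fin (m + 1)) :=
    ⟨fun n i => ⟨n.1 i, Nat.lt_succ_of_le (n.2 i)⟩, fun n n' h =>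
      Subtype.ext <| Finsupp.ext fun i => congrArg Fin.val (congrFun h i)⟩
  calc Fintype.card ι ≤ Module.finrank R (restrictDegree σ R m) := hli.fintype_card_le_finrank
    _ = Nat.card {n : σ →₀ ℕ | ∀ i, n i ≤ m} :=
      Module.finrank_eq_nat_card_basis (basisRestrictSupport R _)
    _ ≤ Nat.card (σ → Fin (m + 1)) := Nat.card_le_card_of_injective _ exponents.injective
    _ = (m + 1) ^ Fintype.card σ := by simp [Nat.card_fun]

variable [DecidableEq σ]

theorem linearIndependent_prod_pow_mul {B : Type*} [Finite B] [DecidableEq B]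
    {g : σ → MvPolynomial σ ℝ} {z : B → σ → ℝ} (hz : ∀ b, IsNondegenerateZero g (z b))
    {p : B → MvPolynomial σ ℝ}
    (hp : ∀ a b, eval (z b) (p a) = (Pi.single a 1 : B → ℝ) b) (T : ℕ) :
    LinearIndependent ℝ fun x : (σ → Fin T) × B => (∏ i, g i ^ (x.1 i : ℕ)) * p x.2 := by
  have := Fintype.ofFinite B
  rw [Fintype.linearIndependent_iff]
  intro c hc
  by_contra! hne
  obtain ⟨⟨α₀, b⟩, hα₀, hmin⟩ := Finset.exists_min_image {x : (σ → Fin T) × B | c x ≠ 0}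
    (fun x => ∑ i, (x.1 i : ℕ)) (hne.imp fun x hx => by simpa using hx)
  simp only [Finset.mem_filter, Finset.mem_univ, true_and] at hα₀ hmin
  set d := ∑ i, (α₀ i : ℕ) with hd
  let exponent (α : σ → Fin T) : σ →₀ ℕ := Finsupp.equivFunOnFinite.symm fun i => α i
  have hexp : Function.Injective exponent := fun α β h => funext fun i =>
    Fin.ext (congrFun (Finsupp.equivFunOnFinite.symm.injective h) i)
  -- The polynomial in the linearised equations that collects the terms of lowest order at `z b`.
  let Q : MvPolynomial σ ℝ :=
    ∑ α, monomial (exponent α) (c (α, b) * 0 ^ (∑ i, (α i : ℕ) - d))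
  have hQ : Q = 0 := MvPolynomial.funext fun y => by
    obtain ⟨w, hw⟩ := (Matrix.mulVec_surjective_iff_isUnit.2 (hz b).isUnit_jacobian) y
    have h := sum_leading_terms_eq_zero (hz b).eval_eq_zero
      (α := fun x : (σ → Fin T) × B => fun i => (x.1 i : ℕ)) hc (fun x hx => hmin x hx) w
    simp only [hw, hp, Fintype.sum_prod_type] at h
    rw [map_zero, ← h, map_sum]
    refine Finset.sum_congr rfl fun α _ => ?_
    rw [Finset.sum_eq_single b (fun a _ ha => by simp [ha.symm]) (by simp), Pi.single_eq_same,
      eval_monomial, Finsupp.prod_fintype _ _ (by simp)]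
    simp only [exponent, Finsupp.equivFunOnFinite_symm_apply_apply]
    ring
  have hcoeff := congrArg (coeff (exponent α₀)) hQ
  simp only [Q, coeff_sum, coeff_monomial, hexp.eq_iff, Finset.sum_ite_eq', Finset.mem_univ,
    if_true, ← hd, Nat.sub_self, pow_zero, mul_one, coeff_zero] at hcoeff
  exact hα₀ hcoeff

/-- A weak form of Bézout's theorem. With `p` separating the zeros, the polynomials
`g ^ α * p b` are independent, and there are too many of them when `α` ranges over a large box. -/
theorem card_nondegenerateZeros_le {B : Type*} [Fintype B] {g : σ → MvPolynomial σ ℝ} {E : ℕ}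
    (hE : ∀ i, (g i).totalDegree ≤ E) {z : B → σ → ℝ} (hz : Function.Injective z)
    (hnd : ∀ b, IsNondegenerateZero g (z b)) :
    Fintype.card B ≤ (Fintype.card σ * E + 1) ^ Fintype.card σ := by
  classical
  obtain ⟨p, hp⟩ := exists_eval_eq_single hz
  let K := Finset.univ.sup fun b => (p b).totalDegree
  have hdeg (x : (σ → Fin (K + 1)) × B) : ((∏ i, g i ^ (x.1 i : ℕ)) * p x.2).totalDegree ≤
      Fintype.card σ * (K * E) + K := by
    refine (totalDegree_mul _ _).trans (add_le_add ((totalDegree_finsetProd _ _).trans ?_)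
      (Finset.le_sup (f := fun b => (p b).totalDegree) (Finset.mem_univ x.2)))
    rw [← smul_eq_mul, ← Finset.card_univ]
    exact Finset.sum_le_card_nsmul _ _ _ fun i _ =>
      (totalDegree_pow _ _).trans (Nat.mul_le_mul (Nat.lt_succ_iff.1 (x.1 i).2) (hE i))
  have hcard : (K + 1) ^ Fintype.card σ * Fintype.card B ≤
      (K + 1) ^ Fintype.card σ * (Fintype.card σ * E + 1) ^ Fintype.card σ := by
    rw [← mul_pow]
    calc (K + 1) ^ Fintype.card σ * Fintype.card B = Fintype.card ((σ → Fin (K + 1)) × B) := by simp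
      _ ≤ (Fintype.card σ * (K * E) + K + 1) ^ Fintype.card σ :=
        card_le_of_linearIndependent (linearIndependent_prod_pow_mul hnd hp (K + 1)) hdeg
      _ ≤ ((K + 1) * (Fintype.card σ * E + 1)) ^ Fintype.card σ := by gcongr; nlinarith
  exact Nat.le_of_mul_le_mul_left hcard (by positivity)

end Polynomials

section Warren

open MvPolynomial Filter Topology

variable {σ : Type*}

/-- The polynomial equations for the critical points of `F * exp ⟨v, ·⟩`. -/
noncomputable def criticalSystem (F : MvPolynomial σ ℝ) (v : σ → ℝ) (i : σ) : MvPolynomial σ ℝ :=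
  pderiv i F + C (v i) * F

theorem totalDegree_criticalSystem_le (F : MvPolynomial σ ℝ) (v : σ → ℝ) (i : σ) :
    (criticalSystem F v i).totalDegree ≤ F.totalDegree :=
  (totalDegree_add _ _).trans (max_le (totalDegree_pderiv_le i F)
    ((totalDegree_mul _ _).trans (by simp)))

/-- The map whose fibre over `v` is the zero set of `criticalSystem F v` off the zeros of `F`. -/
noncomputable def negLogGradient (F : MvPolynomial σ ℝ) (y : σ → ℝ) (i : σ) : ℝ :=
  -eval y (pderiv i F) / eval y F

theorem negLogGradient_eq_iff {F : MvPolynomial σ ℝ} {y v : σ → ℝ} (hy : eval y F ≠ 0) :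
    negLogGradient F y = v ↔ ∀ i, eval y (criticalSystem F v i) = 0 := by
  simp only [funext_iff, negLogGradient, div_eq_iff hy, criticalSystem, map_add, map_mul, eval_C]
  exact forall_congr' fun i => neg_eq_iff_add_eq_zero

theorem exists_bounding_polynomial [Finite σ] {B : Type*} [Finite B] (x : B → σ → ℝ) :
    ∃ q : MvPolynomial σ ℝ, q.totalDegree ≤ 2 ∧
      Bornology.IsBounded {y : σ → ℝ | 0 < eval y q} ∧ ∀ b, 0 < eval (x b) q := by
  have := Fintype.ofFinite σ
  obtain ⟨ρ, hρ⟩ := (Set.finite_range fun b => ∑ i, x b i ^ 2).bddAbove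
  refine ⟨C (ρ + 1) - ∑ i, X i ^ 2, ?_, ?_, fun b => ?_⟩
  · refine (totalDegree_sub _ _).trans (max_le (by rw [totalDegree_C]; simp) ?_)
    exact totalDegree_finsetSum_le fun i _ => (totalDegree_pow _ _).trans (by simp)
  · refine (Metric.isBounded_closedBall (x := 0) (r := √(ρ + 1))).subset fun y hy => ?_
    have hy : 0 < ρ + 1 - ∑ i, y i ^ 2 := by simpa using hy
    rw [mem_closedBall_zero_iff, pi_norm_le_iff_of_nonneg (Real.sqrt_nonneg _)]
    refine fun i => Real.abs_le_sqrt ?_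
    linarith [Finset.single_le_sum (f := fun i => y i ^ 2) (fun _ _ => sq_nonneg _)
      (Finset.mem_univ i)]
  · have : ∑ i, x b i ^ 2 ≤ ρ := hρ ⟨b, rfl⟩
    simp only [map_sub, eval_C, map_sum, map_pow, eval_X]
    linarith

theorem exists_zero_criticalSystem [Finite σ] {F : MvPolynomial σ ℝ} {U : Set (σ → ℝ)}
    (hU : IsOpen U) (hUb : Bornology.IsBounded U) (hF : ∀ y ∈ frontier U, eval y F = 0)
    {x : σ → ℝ} (hx : x ∈ U) (hFx : eval x F ≠ 0) (v : σ → ℝ) :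
    ∃ z ∈ U, eval z F ≠ 0 ∧ ∀ i, eval z (criticalSystem F v i) = 0 := by
  classical
  have := Fintype.ofFinite σ
  let l : (σ → ℝ) →L[ℝ] ℝ := ∑ i, v i • (ContinuousLinearMap.proj i : (σ → ℝ) →L[ℝ] ℝ)
  let G : (σ → ℝ) → ℝ := fun y => eval y F ^ 2 * Real.exp (2 * l y)
  have hG : Continuous G := ((continuous_eval F).pow 2).mul
    (Real.continuous_exp.comp (continuous_const.mul l.continuous))
  obtain ⟨z, hzU, hzmax⟩ := hUb.isCompact_closure.exists_isMaxOn ⟨x, subset_closure hx⟩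
    hG.continuousOn
  have hFz : eval z F ≠ 0 := fun h0 => by
    have hle : G x ≤ G z := hzmax (subset_closure hx)
    have hpos : 0 < G x := by positivity
    simp only [G, h0] at hle hpos
    linarith
  have hzU : z ∈ U := by
    by_contra hz
    exact hFz (hF z ⟨hzU, by rwa [hU.interior_eq]⟩)
  have hcrit := IsLocalMax.hasFDerivAt_eq_zero (a := z) (f := G)
    (by filter_upwards [hU.mem_nhds hzU] with y hy using hzmax (subset_closure hy))
    (((hasFDerivAt_eval F z).pow 2).mul ((l.hasFDerivAt (x := z)).const_mul 2).exp)
  refine ⟨z, hzU, hFz, fun i => ?_⟩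
  have hl : l (Pi.single i 1) = v i := by simp [l, sum_apply, Pi.single_apply]
  have hFi : (∑ j, eval z (pderiv j F) • (ContinuousLinearMap.proj j : (σ → ℝ) →L[ℝ] ℝ))
      (Pi.single i 1) = eval z (pderiv i F) := by simp [sum_apply, Pi.single_apply]
  have hi := DFunLike.congr_fun hcrit (Pi.single i 1)
  simp only [add_apply, smul_apply, zero_apply, hl, hFi, smul_eq_mul] at hi
  have hne : 2 * eval z F * Real.exp (2 * l z) ≠ 0 := by positivity
  refine (mul_eq_zero.1 ?_).resolve_left hne
  simp only [criticalSystem, map_add, map_mul, eval_C]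
  linear_combination hi

theorem exists_zero_criticalSystem_mul_prod [Finite σ] {J : Type*} [Fintype J]
    {q : MvPolynomial σ ℝ} (hq : Bornology.IsBounded {y : σ → ℝ | 0 < eval y q})
    {f : J → MvPolynomial σ ℝ} {x : σ → ℝ} (hqx : 0 < eval x q)
    (hx : ∀ j, eval x (f j) ≠ 0) (v : σ → ℝ) :
    ∃ z, (∀ j, 0 < eval z (f j) * eval x (f j)) ∧ eval z (q * ∏ j, f j) ≠ 0 ∧
      ∀ i, eval z (criticalSystem (q * ∏ j, f j) v i) = 0 := by
  have hF (y : σ → ℝ) : eval y (q * ∏ j, f j) = 0 ↔ eval y q = 0 ∨ ∃ j, eval y (f j) = 0 := by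
    simp [map_prod, Finset.prod_eq_zero_iff]
  have hcont (j : J) : Continuous fun y => eval y (f j) * eval x (f j) :=
    (continuous_eval (f j)).mul continuous_const
  let U : Set (σ → ℝ) := {y | 0 < eval y q} ∩ ⋂ j, {y | 0 < eval y (f j) * eval x (f j)}
  have hU : IsOpen U := (isOpen_lt continuous_const (continuous_eval q)).inter
    (isOpen_iInter_of_finite fun j => isOpen_lt continuous_const (hcont j))
  have hfrontier : ∀ y ∈ frontier U, eval y (q * ∏ j, f j) = 0 := by
    rintro y ⟨hyU, hy⟩
    have hqy := closure_lt_subset_le continuous_const (continuous_eval q)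
      (closure_mono inter_subset_left hyU)
    have hfy (j : J) := closure_lt_subset_le continuous_const (hcont j)
      (closure_mono (inter_subset_right.trans (iInter_subset _ j)) hyU)
    by_contra hne
    simp only [hF, not_or, not_exists] at hne
    rw [hU.interior_eq] at hy
    exact hy ⟨hqy.lt_of_ne' hne.1, mem_iInter.2 fun j =>
      (hfy j).lt_of_ne' (mul_ne_zero (hne.2 j) (hx j))⟩
  obtain ⟨z, hzU, hz⟩ := exists_zero_criticalSystem hU (hq.subset inter_subset_left) hfrontier
    ⟨hqx, mem_iInter.2 fun j => mul_self_pos.2 (hx j)⟩ (by rw [Ne, hF]; simp [hqx.ne', hx]) v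
  exact ⟨z, mem_iInter.1 hzU.2, hz⟩

variable [Fintype σ]

theorem hasFDerivAt_negLogGradient [DecidableEq σ] {F : MvPolynomial σ ℝ} {y : σ → ℝ}
    (hy : eval y F ≠ 0) :
    HasFDerivAt (negLogGradient F) (Matrix.toLin' (-(eval y F)⁻¹ •
      jacobian (criticalSystem F (negLogGradient F y)) y)).toContinuousLinearMap y := by
  refine hasFDerivAt_pi'.2 fun i => ((hasFDerivAt_eval (pderiv i F) y).neg.mul
    ((hasDerivAt_inv hy).comp_hasFDerivAt y (hasFDerivAt_eval F y))).congr_fderiv ?_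
  ext w
  simp only [criticalSystem, negLogGradient, jacobian, ContinuousLinearMap.comp_apply, sum_apply,
    add_apply, neg_apply, smul_apply, LinearMap.coe_toContinuousLinearMap', Function.comp_apply,
    ContinuousLinearMap.proj_apply, Matrix.toLin'_apply, Matrix.smul_mulVec, Matrix.mulVec,
    dotProduct, Matrix.of_apply, Pi.smul_apply, Pi.neg_apply, smul_eq_mul, map_add, pderiv_mul,
    pderiv_C, zero_mul, zero_add, map_mul, eval_C, add_mul, Finset.sum_add_distrib, mul_assoc,
    ← Finset.mul_sum]
  field_simp
  ring

theorem exists_forall_isUnit_jacobian_criticalSystem [DecidableEq σ] (F : MvPolynomial σ ℝ) :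
    ∃ v, ∀ y, eval y F ≠ 0 → (∀ i, eval y (criticalSystem F v i) = 0) →
      IsUnit (jacobian (criticalSystem F v) y) := by
  let S : Set (σ → ℝ) :=
    {y | eval y F ≠ 0 ∧ ¬IsUnit (jacobian (criticalSystem F (negLogGradient F y)) y)}
  have hS : MeasureTheory.volume (negLogGradient F '' S) = 0 := by
    refine MeasureTheory.addHaar_image_eq_zero_of_det_fderivWithin_eq_zero _
      (fun y hy => (hasFDerivAt_negLogGradient hy.1).hasFDerivWithinAt) fun y hy => ?_
    rw [ContinuousLinearMap.det, LinearMap.coe_toContinuousLinearMap, LinearMap.det_toLin',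
      Matrix.det_smul]
    simpa [Matrix.isUnit_iff_isUnit_det, hy.1] using hy.2
  obtain ⟨v, hv⟩ := (Set.ne_univ_iff_exists_notMem (negLogGradient F '' S)).1 fun h =>
    isOpen_univ.measure_ne_zero MeasureTheory.volume univ_nonempty (h ▸ hS)
  refine ⟨v, fun y hy hyv => ?_⟩
  have hyv := (negLogGradient_eq_iff hy).2 hyv
  by_contra hJ
  exact hv ⟨y, ⟨hy, by rwa [hyv]⟩, hyv⟩

/-- A weak form of Warren's theorem: each sign pattern contains a nondegenerate zero of one and
the same critical system. -/
theorem card_le_of_eval_mul_eval_neg {B J : Type*} [Fintype B] [Fintype J]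
    {f : J → MvPolynomial σ ℝ} {D : ℕ} (hD : ∀ j, (f j).totalDegree ≤ D)
    {x : B → σ → ℝ} (hx : ∀ b j, eval (x b) (f j) ≠ 0)
    (hsep : ∀ b b', b ≠ b' → ∃ j, eval (x b) (f j) * eval (x b') (f j) < 0) :
    Fintype.card B ≤ (Fintype.card σ * (Fintype.card J * D + 2) + 1) ^ Fintype.card σ := by
  classical
  obtain ⟨q, hqdeg, hqb, hqx⟩ := exists_bounding_polynomial x
  have hdeg : (q * ∏ j, f j).totalDegree ≤ Fintype.card J * D + 2 := by
    rw [add_comm, ← smul_eq_mul, ← Finset.card_univ]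
    exact (totalDegree_mul _ _).trans (add_le_add hqdeg ((totalDegree_finsetProd _ _).trans
      (Finset.sum_le_card_nsmul _ _ _ fun j _ => hD j)))
  obtain ⟨v, hv⟩ := exists_forall_isUnit_jacobian_criticalSystem (q * ∏ j, f j)
  choose z hzx hz hzv using fun b => exists_zero_criticalSystem_mul_prod hqb (hqx b) (hx b) v
  refine card_nondegenerateZeros_le (fun i => (totalDegree_criticalSystem_le _ v i).trans hdeg)
    (z := z) (fun b b' hbb => ?_) fun b => ⟨hzv b, hv _ (hz b) (hzv b)⟩
  by_contra hne
  obtain ⟨j, hj⟩ := hsep b b' hne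
  have hb' := hzx b' j
  rw [← hbb] at hb'
  nlinarith [mul_pos (hzx b j) hb', sq_nonneg (eval (z b) (f j))]

/-- `f` is a polynomial function of degree at most `d`. -/
def IsPolyFun (f : (σ → ℝ) → ℝ) (d : ℕ) : Prop :=
  ∃ p : MvPolynomial σ ℝ, p.totalDegree ≤ d ∧ ∀ x, eval x p = f x

theorem add_mul_add_neg_or_sub_mul_sub_neg {ε r r' : ℝ} (hε : 0 < ε) (hr : r ≠ 0 → ε < |r|)
    (hr' : r' ≠ 0 → ε < |r'|) (h : SignType.sign r ≠ SignType.sign r') :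
    (r + ε) * (r' + ε) < 0 ∨ (r - ε) * (r' - ε) < 0 := by
  wlog hlt : r < r' generalizing r r'
  · have hne : r ≠ r' := fun he => h (he ▸ rfl)
    simpa only [mul_comm] using this hr' hr h.symm (hne.lt_of_le' (not_lt.1 hlt))
  rcases lt_or_ge 0 r' with hpos | hneg
  · have hr0 : r ≤ 0 := not_lt.1 fun h0 => h (by rw [sign_pos h0, sign_pos hpos])
    have := hr' hpos.ne'
    rw [abs_of_pos hpos] at this
    exact Or.inr (mul_neg_of_neg_of_pos (by linarith) (by linarith))
  · have hr0 : r < 0 := hlt.trans_le hneg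
    have hr'0 : r' = 0 := hneg.antisymm (not_lt.1 fun h0 => h (by rw [sign_neg hr0, sign_neg h0]))
    have := hr hr0.ne
    rw [abs_of_neg hr0] at this
    exact Or.inl (mul_neg_of_neg_of_pos (by linarith) (by linarith))

theorem exists_pos_forall_lt_abs {ι : Type*} [Finite ι] (r : ι → ℝ) :
    ∃ ε > 0, ∀ i, r i ≠ 0 → ε < |r i| := by
  have h : ∀ᶠ ε in 𝓝[>] (0 : ℝ), ∀ i, r i ≠ 0 → ε < |r i| :=
    eventually_all.2 fun i => eventually_imp_distrib_left.2 fun hi =>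
      nhdsWithin_le_nhds (eventually_lt_nhds (abs_pos.2 hi))
  exact (eventually_mem_nhdsWithin.and h).exists

/-- Zero values are handled by replacing each function `f` by the pair `f ± ε`. -/
theorem card_le_of_sign_injective {B J : Type*} [Fintype B] [Fintype J]
    {f : J → (σ → ℝ) → ℝ} {D : ℕ} (hD : ∀ j, IsPolyFun (f j) D) {x : B → σ → ℝ}
    (hx : Function.Injective fun b j => SignType.sign (f j (x b))) :
    Fintype.card B ≤ (Fintype.card σ * (2 * Fintype.card J * D + 2) + 1) ^ Fintype.card σ := by
  choose p hpdeg hp using hD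
  obtain ⟨ε, hε0, hε⟩ := exists_pos_forall_lt_abs fun k : B × J => f k.2 (x k.1)
  have heval (b : B) (j : J) (e : ℝ) : eval (x b) (p j + C e) = f j (x b) + e := by simp [hp]
  have hcard : Fintype.card (J × ℤˣ) = 2 * Fintype.card J := by simp [mul_comm]
  rw [← hcard]
  refine card_le_of_eval_mul_eval_neg (f := fun j : J × ℤˣ => p j.1 + C ((j.2 : ℤ) * ε))
    (fun j => (totalDegree_add _ _).trans (max_le (hpdeg _) (by rw [totalDegree_C]; simp)))
    (x := x) ?_ ?_
  · rintro b ⟨j, s⟩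
    simp only [heval]
    intro h0
    have habs : |f j (x b)| = ε := by
      rw [eq_neg_of_add_eq_zero_left h0]
      rcases Int.units_eq_one_or s with rfl | rfl <;> simp [abs_of_pos hε0]
    exact (hε (b, j) (abs_pos.1 (habs ▸ hε0))).ne' habs
  · intro b b' hne
    obtain ⟨j, hj⟩ := Function.ne_iff.1 (hx.ne hne)
    rcases add_mul_add_neg_or_sub_mul_sub_neg hε0 (hε (b, j)) (hε (b', j)) hj with h | h
    · exact ⟨(j, 1), by simpa [hp] using h⟩
    · exact ⟨(j, -1), by simpa [hp, sub_eq_add_neg] using h⟩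

end Warren

section Decoding

/-- Evaluation at `u` of the real quadratic polynomial with coefficients `q 0, q 1, q 2`, listed by
increasing degree. -/
def quadEval (q : Fin 3 → ℝ) (u : ℝ) : ℝ := q 0 + u * q 1 + u ^ 2 * q 2

/-- `u ∈ (0, 1)` is a root of a quadratic which takes values of opposite signs at `0` and `1`. -/
structure IsSignChangeRoot (q : Fin 3 → ℝ) (u : ℝ) : Prop where
  mem_Ioo : u ∈ Ioo 0 1
  quadEval_eq_zero : quadEval q u = 0
  mul_neg : quadEval q 0 * quadEval q 1 < 0

theorem IsSignChangeRoot.cofactor_mul_pos {q : Fin 3 → ℝ} {u : ℝ} (h : IsSignChangeRoot q u) :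
    0 < (q 1 + u * q 2) * (q 1 + u * q 2 + q 2) := by
  obtain ⟨⟨hu0, hu1⟩, hroot, hneg⟩ := h
  have hprod : quadEval q 0 * quadEval q 1 =
      -(u * (1 - u) * ((q 1 + u * q 2) * (q 1 + u * q 2 + q 2))) := by
    have hq0 : q 0 = -u * (q 1 + u * q 2) := by unfold quadEval at hroot; linarith
    simp only [quadEval, hq0]; ring
  rw [hprod, neg_lt_zero] at hneg
  exact (mul_pos_iff_of_pos_left (mul_pos hu0 (sub_pos.2 hu1))).1 hneg

theorem IsSignChangeRoot.sign_sub {q : Fin 3 → ℝ} {u v : ℝ} (h : IsSignChangeRoot q u)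
    (hv : v ∈ Ioo (0 : ℝ) 1) :
    SignType.sign (v - u) = SignType.sign (quadEval q v) * SignType.sign (quadEval q 1) := by
  have hpos := h.cofactor_mul_pos
  obtain ⟨⟨_, hu1⟩, hroot, -⟩ := h
  set g := q 1 + u * q 2
  have hq0 : q 0 = -u * g := by unfold quadEval at hroot; linarith
  have hq1 : q 1 = g - u * q 2 := by linarith
  have hprod : quadEval q v * quadEval q 1 =
      (1 - u) * ((1 - v) * (g * (g + q 2)) + v * (g + q 2) ^ 2) * (v - u) := by
    simp only [quadEval, hq0, hq1]; ring
  have hscale : 0 < (1 - u) * ((1 - v) * (g * (g + q 2)) + v * (g + q 2) ^ 2) :=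
    mul_pos (sub_pos.2 hu1)
      (add_pos_of_pos_of_nonneg (mul_pos (sub_pos.2 hv.2) hpos)
        (mul_nonneg hv.1.le (sq_nonneg _)))
  rw [← sign_mul, hprod, sign_mul, sign_pos hscale, one_mul]

theorem IsSignChangeRoot.derivative_mul_pos {q : Fin 3 → ℝ} {u : ℝ} (h : IsSignChangeRoot q u) :
    0 < (q 1 + 2 * u * q 2) * quadEval q 1 := by
  have hpos := h.cofactor_mul_pos
  obtain ⟨⟨hu0, hu1⟩, hroot, -⟩ := h
  set g := q 1 + u * q 2
  have hprod : (q 1 + 2 * u * q 2) * quadEval q 1 =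
      (1 - u) * ((1 - u) * (g * (g + q 2)) + u * (g + q 2) ^ 2) := by
    have hq0 : q 0 = -u * g := by unfold quadEval at hroot; linarith
    have hq1 : q 1 = g - u * q 2 := by linarith
    simp only [quadEval, hq0, hq1]; ring
  rw [hprod]
  exact mul_pos (sub_pos.2 hu1)
    (add_pos_of_pos_of_nonneg (mul_pos (sub_pos.2 hu1) hpos) (mul_nonneg hu0.le (sq_nonneg _)))

/-- The discriminant of a quadratic. -/
def quadDiscr (q : Fin 3 → ℝ) : ℝ := q 1 ^ 2 - 4 * q 0 * q 2

/-- The value of `p` at a root `u` of `q` is, up to a positive factor,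
`rationalPart q p + radicalPart q p * q'(u)`, where `q'(u) ^ 2 = quadDiscr q`. -/
def rationalPart (q p : Fin 3 → ℝ) : ℝ :=
  p 0 * (q 1 ^ 2 + quadDiscr q) - 2 * (q 0 * (q 1 * p 1)) + 4 * (q 0 ^ 2 * p 2)

/-- The coefficient of the square root of the discriminant of `q` in the value of `p` at a root
of `q`; see `rationalPart`. -/
def radicalPart (q p : Fin 3 → ℝ) : ℝ := 2 * (p 0 * q 1 - q 0 * p 1)

/-- The norm of `rationalPart q p + radicalPart q p * √(quadDiscr q)`, which is, up to a factor,
the resultant of `q` and `p`. -/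
def radicalNorm (q p : Fin 3 → ℝ) : ℝ :=
  rationalPart q p ^ 2 - radicalPart q p ^ 2 * quadDiscr q

theorem IsSignChangeRoot.derivative_sq {q : Fin 3 → ℝ} {u : ℝ} (h : IsSignChangeRoot q u) :
    (q 1 + 2 * u * q 2) ^ 2 = quadDiscr q := by
  have hroot := h.quadEval_eq_zero
  unfold quadEval at hroot
  unfold quadDiscr
  linear_combination 4 * q 2 * hroot

-- Write the root as `u = -2 q₀ / (q₁ + q'(u))`.
theorem IsSignChangeRoot.sign_quadEval {q p : Fin 3 → ℝ} {u : ℝ} (h : IsSignChangeRoot q u) :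
    SignType.sign (quadEval p u) =
      SignType.sign (rationalPart q p + radicalPart q p * (q 1 + 2 * u * q 2)) := by
  have hscale : 0 < (2 * (q 1 + u * q 2)) ^ 2 := by
    have := left_ne_zero_of_mul h.cofactor_mul_pos.ne'
    positivity
  have hvalue : rationalPart q p + radicalPart q p * (q 1 + 2 * u * q 2) =
      (2 * (q 1 + u * q 2)) ^ 2 * quadEval p u := by
    have hq0 : q 0 = -u * (q 1 + u * q 2) := by
      have := h.quadEval_eq_zero; unfold quadEval at this; linarith
    simp only [rationalPart, radicalPart, ← h.derivative_sq, quadEval, hq0]; ring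
  rw [hvalue, sign_mul, sign_pos hscale, one_mul]

theorem sign_eq_of_mul_pos {x y : ℝ} (h : 0 < x * y) : SignType.sign x = SignType.sign y := by
  rcases pos_and_pos_or_neg_and_neg_of_mul_pos h with ⟨hx, hy⟩ | ⟨hx, hy⟩
  · rw [sign_pos hx, sign_pos hy]
  · rw [sign_neg hx, sign_neg hy]

theorem sign_add_of_sq_lt_sq {x y : ℝ} (h : y ^ 2 < x ^ 2) :
    SignType.sign (x + y) = SignType.sign x := by
  have habs := sq_lt_sq.1 h
  refine sign_eq_of_mul_pos ?_
  have hmul : |x * y| < x ^ 2 := by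
    rw [abs_mul, ← sq_abs x, sq]
    exact mul_lt_mul_of_pos_left habs ((abs_nonneg y).trans_lt habs)
  linarith [neg_abs_le (x * y)]

theorem sign_add_of_sq_eq_sq {x y : ℝ} (h : x ^ 2 = y ^ 2) :
    SignType.sign (x + y) =
      if SignType.sign x = SignType.sign y then SignType.sign x else 0 := by
  rcases sq_eq_sq_iff_eq_or_eq_neg.1 h with rfl | rfl
  · rw [if_pos rfl, ← two_mul, sign_mul, sign_pos two_pos, one_mul]
  · rw [neg_add_cancel, sign_zero, Left.sign_neg]
    split_ifs with hy
    · exact (SignType.neg_eq_zero_iff.2 (SignType.neg_eq_self_iff.1 hy)).symm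
    · rfl

theorem sign_add_eq_of_sign_sq_sub_sq_eq {x y x' y' : ℝ}
    (hx : SignType.sign x = SignType.sign x') (hy : SignType.sign y = SignType.sign y')
    (hsq : SignType.sign (x ^ 2 - y ^ 2) = SignType.sign (x' ^ 2 - y' ^ 2)) :
    SignType.sign (x + y) = SignType.sign (x' + y') := by
  rcases lt_trichotomy (x ^ 2) (y ^ 2) with h | h | h
  · have h' : x' ^ 2 < y' ^ 2 := by
      rw [← sub_neg, ← sign_eq_neg_one_iff] at h ⊢
      exact hsq.symm.trans h
    rw [add_comm, sign_add_of_sq_lt_sq h, add_comm, sign_add_of_sq_lt_sq h', hy]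
  · have h' : x' ^ 2 = y' ^ 2 := by
      rw [← sub_eq_zero, ← sign_eq_zero_iff] at h ⊢
      exact hsq.symm.trans h
    rw [sign_add_of_sq_eq_sq h, sign_add_of_sq_eq_sq h', hx, hy]
  · have h' : y' ^ 2 < x' ^ 2 := by
      rw [← sub_pos, ← sign_eq_one_iff] at h ⊢
      exact hsq.symm.trans h
    rw [sign_add_of_sq_lt_sq h, sign_add_of_sq_lt_sq h', hx]

theorem IsSignChangeRoot.sign_quadEval_congr {q p q' p' : Fin 3 → ℝ} {u u' : ℝ}
    (h : IsSignChangeRoot q u) (h' : IsSignChangeRoot q' u')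
    (hone : SignType.sign (quadEval q 1) = SignType.sign (quadEval q' 1))
    (hrat : SignType.sign (rationalPart q p) = SignType.sign (rationalPart q' p'))
    (hrad : SignType.sign (radicalPart q p) = SignType.sign (radicalPart q' p'))
    (hnorm : SignType.sign (radicalNorm q p) = SignType.sign (radicalNorm q' p')) :
    SignType.sign (quadEval p u) = SignType.sign (quadEval p' u') := by
  rw [h.sign_quadEval, h'.sign_quadEval]
  refine sign_add_eq_of_sign_sq_sub_sq_eq hrat ?_ ?_
  · rw [sign_mul, sign_mul, hrad, sign_eq_of_mul_pos h.derivative_mul_pos,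
      sign_eq_of_mul_pos h'.derivative_mul_pos, hone]
  · rwa [mul_pow, mul_pow, h.derivative_sq, h'.derivative_sq]

/-- Algebraic coordinates of a circular arc or a segment: the coefficients of the equation
`form ⬝ᵥ (x² + y², x, y, 1) = 0` of its carrier, and vectors such that
`conic 0 + u • conic 1 + u² • conic 2` is proportional to `(x² + y², x, y, 1)` at the point of
parameter `u ∈ [0, 1]` of the arc. -/
structure ArcCoords where
  form : Fin 4 → ℝ
  conic : Fin 3 → Fin 4 → ℝ

/-- The quadratic polynomial obtained by restricting the equation of the carrier of `X` to the
parametrization of `Y`. -/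
def ArcCoords.formAlong (X Y : ArcCoords) (i : Fin 3) : ℝ := X.form ⬝ᵥ Y.conic i

/-- The conditions met by the coordinates of two arcs which cross inside, at the points of
parameters `u` and `v`. -/
structure ArcCoords.Meets (X Y : ArcCoords) (u v : ℝ) : Prop where
  left_mem : u ∈ Ioo 0 1
  right_mem : v ∈ Ioo 0 1
  left_root : quadEval (Y.formAlong X) u = 0
  right_root : quadEval (X.formAlong Y) v = 0
  sign_change : quadEval (Y.formAlong X) 0 * quadEval (Y.formAlong X) 1 < 0 ∨
    quadEval (X.formAlong Y) 0 * quadEval (X.formAlong Y) 1 < 0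

/-- `x` and `y` are distinct, in increasing order if `b` and in decreasing order otherwise. -/
def OrderedBy (b : Bool) (x y : ℝ) : Prop := if b then x < y else y < x

theorem OrderedBy.trans {b : Bool} {x y z : ℝ} (hxy : OrderedBy b x y) (hyz : OrderedBy b y z) :
    OrderedBy b x z := by
  cases b
  · exact lt_trans (b := y) hyz hxy
  · exact lt_trans (b := y) hxy hyz

theorem OrderedBy.eq_of_sign_eq {b b' : Bool} {x y x' y' : ℝ} (h : OrderedBy b x y)
    (h' : OrderedBy b' x' y') (hs : SignType.sign (y - x) = SignType.sign (y' - x')) : b = b' := by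
  have hsign {c : Bool} {s t : ℝ} (hc : OrderedBy c s t) :
      SignType.sign (t - s) = if c then 1 else -1 := by
    cases c
    · exact sign_neg (sub_neg.2 hc)
    · exact sign_pos (sub_pos.2 hc)
  rw [hsign h, hsign h'] at hs
  revert hs
  cases b <;> cases b' <;> decide

/-- The triangle formed by the arcs `A`, `V`, `H` has orientation `b`; `w` lists the parameters on
`V` and on `H` of the crossing of these two arcs. -/
def ArcCoords.FormTriangle (b : Bool) (A V H : ArcCoords) (w : Fin 2 → ℝ) : Prop :=
  w 0 ∈ Ioo 0 1 ∧ w 1 ∈ Ioo 0 1 ∧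
    ∃ uV v uH h, A.Meets V uV v ∧ A.Meets H uH h ∧
      OrderedBy b uH uV ∧ OrderedBy b v (w 0) ∧ OrderedBy b h (w 1)

/-- The polynomials whose signs determine the orientation of a triangle formed by three arcs. -/
def decodingPoly (A V H : ArcCoords) (w : Fin 2 → ℝ) : Fin 11 → ℝ :=
  let q := V.formAlong A
  let p := H.formAlong A
  ![quadEval (A.formAlong V) 0, quadEval (A.formAlong V) 1, quadEval (A.formAlong V) (w 0),
    quadEval (A.formAlong H) 0, quadEval (A.formAlong H) 1, quadEval (A.formAlong H) (w 1),
    quadEval q 1, quadEval p 1, rationalPart q p, radicalPart q p, radicalNorm q p]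

theorem mul_neg_iff_of_sign_eq {x y x' y' : ℝ} (hx : SignType.sign x = SignType.sign x')
    (hy : SignType.sign y = SignType.sign y') : x * y < 0 ↔ x' * y' < 0 := by
  rw [← sign_eq_neg_one_iff, sign_mul, hx, hy, ← sign_mul, sign_eq_neg_one_iff]

/-- If `A` changes sides of the carrier of `V` or `H`, compare the parameters on that arc;
otherwise compare the two parameters on `A`, both roots of quadratics. -/
theorem ArcCoords.FormTriangle.orientation_eq {A V H A' V' H' : ArcCoords} {w w' : Fin 2 → ℝ}
    {b b' : Bool} (h : FormTriangle b A V H w) (h' : FormTriangle b' A' V' H' w')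
    (hs : ∀ j, SignType.sign (decodingPoly A V H w j) =
      SignType.sign (decodingPoly A' V' H' w' j)) : b = b' := by
  obtain ⟨hw0, hw1, uV, v, uH, h, mV, mH, oA, oV, oH⟩ := h
  obtain ⟨hw0', hw1', uV', v', uH', h', mV', mH', oA', oV', oH'⟩ := h'
  have iffV := mul_neg_iff_of_sign_eq (hs 0) (hs 1)
  have iffH := mul_neg_iff_of_sign_eq (hs 3) (hs 4)
  by_cases hV : quadEval (A.formAlong V) 0 * quadEval (A.formAlong V) 1 < 0
  · have root : IsSignChangeRoot (A.formAlong V) v := ⟨mV.right_mem, mV.right_root, hV⟩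
    have root' : IsSignChangeRoot (A'.formAlong V') v' :=
      ⟨mV'.right_mem, mV'.right_root, iffV.1 hV⟩
    exact oV.eq_of_sign_eq oV' (by
      rw [root.sign_sub hw0, root'.sign_sub hw0']; exact congr_arg₂ _ (hs 2) (hs 1))
  by_cases hH : quadEval (A.formAlong H) 0 * quadEval (A.formAlong H) 1 < 0
  · have root : IsSignChangeRoot (A.formAlong H) h := ⟨mH.right_mem, mH.right_root, hH⟩
    have root' : IsSignChangeRoot (A'.formAlong H') h' :=
      ⟨mH'.right_mem, mH'.right_root, iffH.1 hH⟩
    exact oH.eq_of_sign_eq oH' (by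
      rw [root.sign_sub hw1, root'.sign_sub hw1']; exact congr_arg₂ _ (hs 5) (hs 4))
  have rootV : IsSignChangeRoot (V.formAlong A) uV :=
    ⟨mV.left_mem, mV.left_root, mV.sign_change.resolve_right hV⟩
  have rootV' : IsSignChangeRoot (V'.formAlong A') uV' :=
    ⟨mV'.left_mem, mV'.left_root, mV'.sign_change.resolve_right (mt iffV.2 hV)⟩
  have rootH : IsSignChangeRoot (H.formAlong A) uH :=
    ⟨mH.left_mem, mH.left_root, mH.sign_change.resolve_right hH⟩
  have rootH' : IsSignChangeRoot (H'.formAlong A') uH' :=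
    ⟨mH'.left_mem, mH'.left_root, mH'.sign_change.resolve_right (mt iffH.2 hH)⟩
  have hroot : SignType.sign (quadEval (H.formAlong A) uV) =
      SignType.sign (quadEval (H'.formAlong A') uV') :=
    rootV.sign_quadEval_congr rootV' (hs 6) (hs 8) (hs 9) (hs 10)
  exact oA.eq_of_sign_eq oA' (by
    rw [rootH.sign_sub mV.left_mem, rootH'.sign_sub mV'.left_mem]
    exact congr_arg₂ _ hroot (hs 7))

end Decoding

section PolynomialFunctions

variable {σ : Type*} {f g : (σ → ℝ) → ℝ} {d e : ℕ}

theorem IsPolyFun.mono (hf : IsPolyFun f d) (h : d ≤ e) : IsPolyFun f e :=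
  let ⟨p, hp, hpf⟩ := hf
  ⟨p, hp.trans h, hpf⟩

theorem IsPolyFun.add (hf : IsPolyFun f d) (hg : IsPolyFun g e) :
    IsPolyFun (fun x => f x + g x) (max d e) :=
  let ⟨p, hp, hpf⟩ := hf
  let ⟨q, hq, hqg⟩ := hg
  ⟨p + q, (MvPolynomial.totalDegree_add p q).trans (max_le_max hp hq), by simp [hpf, hqg]⟩

theorem IsPolyFun.mul (hf : IsPolyFun f d) (hg : IsPolyFun g e) :
    IsPolyFun (fun x => f x * g x) (d + e) :=
  let ⟨p, hp, hpf⟩ := hf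
  let ⟨q, hq, hqg⟩ := hg
  ⟨p * q, (MvPolynomial.totalDegree_mul p q).trans (add_le_add hp hq), by simp [hpf, hqg]⟩

theorem IsPolyFun.const (c : ℝ) : IsPolyFun (fun _ : σ → ℝ => c) 0 :=
  ⟨MvPolynomial.C c, by simp, by simp⟩

theorem IsPolyFun.coord (i : σ) : IsPolyFun (fun x : σ → ℝ => x i) 1 :=
  ⟨MvPolynomial.X i, by simp, by simp⟩

theorem IsPolyFun.pow (hf : IsPolyFun f d) (n : ℕ) : IsPolyFun (fun x => f x ^ n) (n * d) :=
  let ⟨p, hp, hpf⟩ := hf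
  ⟨p ^ n, (MvPolynomial.totalDegree_pow p n).trans (Nat.mul_le_mul_left n hp), by simp [hpf]⟩

theorem IsPolyFun.const_mul (hf : IsPolyFun f d) (c : ℝ) : IsPolyFun (fun x => c * f x) d := by
  simpa only [zero_add] using (IsPolyFun.const c).mul hf

theorem IsPolyFun.sub (hf : IsPolyFun f d) (hg : IsPolyFun g e) :
    IsPolyFun (fun x => f x - g x) (max d e) := by
  simpa only [neg_one_mul, ← sub_eq_add_neg] using hf.add (hg.const_mul (-1))

theorem IsPolyFun.dotProduct {ι : Type*} [Fintype ι] {v w : (σ → ℝ) → ι → ℝ}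
    (hv : ∀ i, IsPolyFun (fun x => v x i) d) (hw : ∀ i, IsPolyFun (fun x => w x i) e) :
    IsPolyFun (fun x => v x ⬝ᵥ w x) (d + e) := by
  choose p hp hpv using fun i => (hv i).mul (hw i)
  exact ⟨∑ i, p i, MvPolynomial.totalDegree_finsetSum_le fun i _ => hp i, by
    simp [hpv, _root_.dotProduct]⟩

variable {q p : (σ → ℝ) → Fin 3 → ℝ}

theorem IsPolyFun.quadEval (hq : ∀ i, IsPolyFun (fun x => q x i) d) (hf : IsPolyFun f e) :
    IsPolyFun (fun x => quadEval (q x) (f x)) (2 * e + d) :=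
  (((hq 0).add (hf.mul (hq 1))).add ((hf.pow 2).mul (hq 2))).mono (by omega)

theorem IsPolyFun.quadDiscr (hq : ∀ i, IsPolyFun (fun x => q x i) d) :
    IsPolyFun (fun x => quadDiscr (q x)) (2 * d) :=
  (((hq 1).pow 2).sub (((hq 0).const_mul 4).mul (hq 2))).mono (by omega)

theorem IsPolyFun.rationalPart (hq : ∀ i, IsPolyFun (fun x => q x i) d)
    (hp : ∀ i, IsPolyFun (fun x => p x i) d) :
    IsPolyFun (fun x => rationalPart (q x) (p x)) (3 * d) :=
  ((((hp 0).mul (((hq 1).pow 2).add (.quadDiscr hq))).sub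
    (((hq 0).mul ((hq 1).mul (hp 1))).const_mul 2)).add
      ((((hq 0).pow 2).mul (hp 2)).const_mul 4)).mono (by omega)

theorem IsPolyFun.radicalPart (hq : ∀ i, IsPolyFun (fun x => q x i) d)
    (hp : ∀ i, IsPolyFun (fun x => p x i) d) :
    IsPolyFun (fun x => radicalPart (q x) (p x)) (2 * d) :=
  ((((hp 0).mul (hq 1)).sub ((hq 0).mul (hp 1))).const_mul 2).mono (by omega)

theorem IsPolyFun.radicalNorm (hq : ∀ i, IsPolyFun (fun x => q x i) d)
    (hp : ∀ i, IsPolyFun (fun x => p x i) d) :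
    IsPolyFun (fun x => radicalNorm (q x) (p x)) (6 * d) :=
  (((rationalPart hq hp).pow 2).sub (((radicalPart hq hp).pow 2).mul (.quadDiscr hq))).mono
    (by omega)

theorem IsPolyFun.formAlong {X Y : (σ → ℝ) → ArcCoords}
    (hX : ∀ i, IsPolyFun (fun x => (X x).form i) d)
    (hY : ∀ i j, IsPolyFun (fun x => (Y x).conic i j) e) (i : Fin 3) :
    IsPolyFun (fun x => (X x).formAlong (Y x) i) (d + e) :=
  .dotProduct hX (hY i)

end PolynomialFunctions

section Counting

/-- The variables describing the arcs of `C` and a pair of parameters for each element of `W`. -/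
abbrev ArcVar (C W : Type*) := (C × (Fin 4 ⊕ Fin 3 × Fin 4)) ⊕ (W × Fin 2)

/-- The coordinates of the arc `c`, as read off from the values of the variables. -/
def arcOf {C W : Type*} (c : C) (x : ArcVar C W → ℝ) : ArcCoords where
  form i := x (.inl (c, .inl i))
  conic i j := x (.inl (c, .inr (i, j)))

theorem isPolyFun_decodingPoly {C W : Type*} (cA cV cH : C) (v : W) (j : Fin 11) :
    IsPolyFun (fun x : ArcVar C W → ℝ => decodingPoly (arcOf cA x) (arcOf cV x) (arcOf cH x)
      (fun r => x (.inr (v, r))) j) 12 := by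
  have along (c c' : C) (i : Fin 3) :
      IsPolyFun (fun x : ArcVar C W → ℝ => (arcOf c x).formAlong (arcOf c' x) i) 2 :=
    IsPolyFun.formAlong (X := arcOf c) (Y := arcOf c') (d := 1) (e := 1)
      (fun r => .coord (Sum.inl (c, Sum.inl r)))
      (fun r s => .coord (Sum.inl (c', Sum.inr (r, s)))) i
  have evalConst (c c' : C) (u : ℝ) :
      IsPolyFun (fun x : ArcVar C W → ℝ => quadEval ((arcOf c x).formAlong (arcOf c' x)) u) 12 :=
    (IsPolyFun.quadEval (along c c') (.const u)).mono (by norm_num)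
  have evalVar (c c' : C) (r : Fin 2) :
      IsPolyFun (fun x : ArcVar C W → ℝ =>
        quadEval ((arcOf c x).formAlong (arcOf c' x)) (x (.inr (v, r)))) 12 :=
    (IsPolyFun.quadEval (along c c') (.coord _)).mono (by norm_num)
  fin_cases j
  · exact evalConst cA cV 0
  · exact evalConst cA cV 1
  · exact evalVar cA cV 0
  · exact evalConst cA cH 0
  · exact evalConst cA cH 1
  · exact evalVar cA cH 1
  · exact evalConst cV cA 1
  · exact evalConst cH cA 1
  · exact (IsPolyFun.rationalPart (along cV cA) (along cH cA)).mono (by norm_num)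
  · exact (IsPolyFun.radicalPart (along cV cA) (along cH cA)).mono (by norm_num)
  · exact (IsPolyFun.radicalNorm (along cV cA) (along cH cA)).mono (by norm_num)

theorem two_pow_card_le_of_forall_formTriangle {C W G : Type*} [Fintype C] [Fintype W] [Fintype G]
    {cA cV cH : G → C} {v : G → W}
    (hreal : ∀ β : G → Bool, ∃ (X : C → ArcCoords) (w : W → Fin 2 → ℝ),
      ∀ g, ArcCoords.FormTriangle (β g) (X (cA g)) (X (cV g)) (X (cH g)) (w (v g))) :
    2 ^ Fintype.card G ≤
      ((Fintype.card C * 16 + Fintype.card W * 2) * (264 * Fintype.card G + 2) + 1) ^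
        (Fintype.card C * 16 + Fintype.card W * 2) := by
  classical
  choose X w hX using hreal
  let x (β : G → Bool) : ArcVar C W → ℝ :=
    Sum.elim (fun s => s.2.elim (X β s.1).form fun t => (X β s.1).conic t.1 t.2)
      fun s => w β s.1 s.2
  have hinj : Function.Injective fun β (j : G × Fin 11) =>
      SignType.sign (decodingPoly (arcOf (cA j.1) (x β)) (arcOf (cV j.1) (x β))
        (arcOf (cH j.1) (x β)) (fun r => x β (.inr (v j.1, r))) j.2) := fun β β' hs =>
    funext fun g => (hX β g).orientation_eq (hX β' g) fun j => congr_fun hs (g, j)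
  have h := card_le_of_sign_injective
    (fun j : G × Fin 11 => isPolyFun_decodingPoly (cA j.1) (cV j.1) (cH j.1) (v j.1) j.2) hinj
  have hvars : Fintype.card (ArcVar C W) = Fintype.card C * 16 + Fintype.card W * 2 := by simp
  have hpolys : 2 * Fintype.card (G × Fin 11) * 12 = 264 * Fintype.card G := by
    simp only [Fintype.card_prod, Fintype.card_fin]; ring
  rwa [hvars, hpolys, Fintype.card_fun, Fintype.card_bool] at h

theorem exists_orientation_not_formTriangle {C W G : Type*} [Fintype C] [Fintype W] [Fintype G]
    (cA cV cH : G → C) (v : G → W) {e : ℕ}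
    (hbase : (Fintype.card C * 16 + Fintype.card W * 2) * (264 * Fintype.card G + 2) + 1 ≤ 2 ^ e)
    (hexp : e * (Fintype.card C * 16 + Fintype.card W * 2) < Fintype.card G) :
    ∃ β : G → Bool, ∀ (X : C → ArcCoords) (w : W → Fin 2 → ℝ),
      ∃ g, ¬ ArcCoords.FormTriangle (β g) (X (cA g)) (X (cV g)) (X (cH g)) (w (v g)) := by
  by_contra! hreal
  refine (two_pow_card_le_of_forall_formTriangle hreal).not_gt ?_
  calc _ ≤ (2 ^ e) ^ (Fintype.card C * 16 + Fintype.card W * 2) := Nat.pow_le_pow_left hbase _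
    _ = 2 ^ (e * (Fintype.card C * 16 + Fintype.card W * 2)) := (pow_mul _ _ _).symm
    _ < 2 ^ Fintype.card G := Nat.pow_lt_pow_right one_lt_two hexp

end Counting

section Circles

variable {a b : Fin 4 → ℝ} {p q z : Plane}

theorem plane_ext (h0 : p 0 = q 0) (h1 : p 1 = q 1) : p = q := by
  ext i; fin_cases i <;> assumption

theorem zero_lt_sq_add_sq_of_ne (h : p ≠ q) : 0 < (p 0 - q 0) ^ 2 + (p 1 - q 1) ^ 2 := by
  refine lt_of_le_of_ne (by positivity) fun h0 => h (plane_ext ?_ ?_)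
  · nlinarith [sq_nonneg (p 0 - q 0), sq_nonneg (p 1 - q 1)]
  · nlinarith [sq_nonneg (p 0 - q 0), sq_nonneg (p 1 - q 1)]

/-- The lift of a point to the paraboloid, in homogeneous coordinates: circles and lines are the
preimages of planes. -/
def paraboloidLift (p : Plane) : Fin 4 → ℝ := ![p 0 ^ 2 + p 1 ^ 2, p 0, p 1, 1]

/-- The polynomial `a₀|p|² + a₁p₀ + a₂p₁ + a₃`, whose zero set is a circle or a line. -/
def circleForm (a : Fin 4 → ℝ) (p : Plane) : ℝ := a ⬝ᵥ paraboloidLift p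

/-- The zero set of `circleForm a` is a circle of positive radius or a line. -/
def IsNondegenerateCircle (a : Fin 4 → ℝ) : Prop := 0 < a 1 ^ 2 + a 2 ^ 2 - 4 * a 0 * a 3

/-- The gradient of `circleForm a`. -/
def circleGrad (a : Fin 4 → ℝ) (p : Plane) : Plane :=
  !₂[2 * a 0 * p 0 + a 1, 2 * a 0 * p 1 + a 2]

/-- The point with parameter `u` of the parametrized conic `q` in the projective lift. -/
def conicPoint (q : Fin 3 → Fin 4 → ℝ) (u : ℝ) : Fin 4 → ℝ := q 0 + u • q 1 + u ^ 2 • q 2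

theorem circleForm_apply (a : Fin 4 → ℝ) (p : Plane) :
    circleForm a p = a 0 * (p 0 ^ 2 + p 1 ^ 2) + a 1 * p 0 + a 2 * p 1 + a 3 := by
  simp [circleForm, paraboloidLift, dotProduct, Fin.sum_univ_four]

theorem paraboloidLift_injective : Function.Injective paraboloidLift := fun _ _ h =>
  plane_ext (congr_fun h 1) (congr_fun h 2)

theorem dotProduct_conicPoint (a : Fin 4 → ℝ) (q : Fin 3 → Fin 4 → ℝ) (u : ℝ) :
    a ⬝ᵥ conicPoint q u = quadEval (fun i => a ⬝ᵥ q i) u := by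
  simp [conicPoint, quadEval, dotProduct_add]

theorem IsNondegenerateCircle.grad_pos (ha : IsNondegenerateCircle a) (hp : circleForm a p = 0) :
    0 < circleGrad a p 0 ^ 2 + circleGrad a p 1 ^ 2 := by
  rw [circleForm_apply] at hp
  have h : circleGrad a p 0 ^ 2 + circleGrad a p 1 ^ 2 = a 1 ^ 2 + a 2 ^ 2 - 4 * a 0 * a 3 := by
    simp only [circleGrad, PiLp.toLp_apply, Matrix.cons_val_zero, Matrix.cons_val_one]
    linear_combination 4 * a 0 * hp
  exact h ▸ ha

/-- Stereographic projection from `z` of the circle `a` through `z`, normalized so as to make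
sense for lines also. -/
noncomputable def stereo (a : Fin 4 → ℝ) (z p : Plane) : ℝ :=
  (circleGrad a z 0 * (p 1 - z 1) - circleGrad a z 1 * (p 0 - z 0)) /
    ((p 0 - z 0) ^ 2 + (p 1 - z 1) ^ 2)

/-- The conic parametrizing the circle `a` by the coordinate `stereo a z`. -/
def stereoConic (a : Fin 4 → ℝ) (z : Plane) : Fin 3 → Fin 4 → ℝ :=
  let n := circleGrad a z
  ![a 0 ^ 2 • paraboloidLift z +
      ![n 0 ^ 2 + n 1 ^ 2 - 2 * a 0 * (z 0 * n 0 + z 1 * n 1), -a 0 * n 0, -a 0 * n 1, 0],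
    ![2 * (z 1 * n 0 - z 0 * n 1), -n 1, n 0, 0], paraboloidLift z]

theorem smul_sub_eq_stereo (hz : circleForm a z = 0)
    (hp : circleForm a p = 0) (hpz : p ≠ z) :
    let n := circleGrad a z
    let t := stereo a z p
    (a 0 ^ 2 + t ^ 2) * (p 0 - z 0) = -a 0 * n 0 - t * n 1 ∧
      (a 0 ^ 2 + t ^ 2) * (p 1 - z 1) = -a 0 * n 1 + t * n 0 ∧
      (a 0 ^ 2 + t ^ 2) * ((p 0 - z 0) ^ 2 + (p 1 - z 1) ^ 2) = n 0 ^ 2 + n 1 ^ 2 := by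
  intro n t
  set D := (p 0 - z 0) ^ 2 + (p 1 - z 1) ^ 2 with hD
  have hDpos : D ≠ 0 := (zero_lt_sq_add_sq_of_ne hpz).ne'
  have tangent : t * D = n 0 * (p 1 - z 1) - n 1 * (p 0 - z 0) := div_mul_cancel₀ _ hDpos
  have normal : -a 0 * D = n 0 * (p 0 - z 0) + n 1 * (p 1 - z 1) := by
    rw [circleForm_apply] at hp hz
    simp only [n, hD, circleGrad, PiLp.toLp_apply, Matrix.cons_val_zero, Matrix.cons_val_one]
    linear_combination hz - hp
  have hnorm : (a 0 ^ 2 + t ^ 2) * D = n 0 ^ 2 + n 1 ^ 2 := mul_right_cancel₀ hDpos <| by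
    linear_combination (-a 0 * D + n 0 * (p 0 - z 0) + n 1 * (p 1 - z 1)) * normal +
      (t * D + n 0 * (p 1 - z 1) - n 1 * (p 0 - z 0)) * tangent - (n 0 ^ 2 + n 1 ^ 2) * hD
  refine ⟨mul_right_cancel₀ hDpos ?_, mul_right_cancel₀ hDpos ?_, hnorm⟩
  · linear_combination (p 0 - z 0) * hnorm - n 0 * normal + n 1 * tangent
  · linear_combination (p 1 - z 1) * hnorm - n 1 * normal - n 0 * tangent

theorem smul_paraboloidLift_eq_conicPoint (ha : IsNondegenerateCircle a) (hz : circleForm a z = 0)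
    (hp : circleForm a p = 0) (hpz : p ≠ z) :
    0 < a 0 ^ 2 + stereo a z p ^ 2 ∧ (a 0 ^ 2 + stereo a z p ^ 2) • paraboloidLift p =
      conicPoint (stereoConic a z) (stereo a z p) := by
  obtain ⟨h0, h1, h2⟩ := smul_sub_eq_stereo hz hp hpz
  refine ⟨pos_of_mul_pos_left (h2 ▸ ha.grad_pos hz) (zero_lt_sq_add_sq_of_ne hpz).le, ?_⟩
  funext i
  fin_cases i <;> simp [paraboloidLift, conicPoint, stereoConic]
  · linear_combination h2 + 2 * z 0 * h0 + 2 * z 1 * h1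
  · linear_combination h0
  · linear_combination h1

theorem stereo_injOn (ha : IsNondegenerateCircle a) (hz : circleForm a z = 0) :
    InjOn (stereo a z) {p | circleForm a p = 0 ∧ p ≠ z} := by
  intro p hp q hq hpq
  obtain ⟨hpos, hlift⟩ := smul_paraboloidLift_eq_conicPoint ha hz hp.1 hp.2
  have hlift' := (smul_paraboloidLift_eq_conicPoint ha hz hq.1 hq.2).2
  rw [hpq] at hpos hlift
  exact paraboloidLift_injective (smul_right_injective _ hpos.ne' (hlift.trans hlift'.symm))

/-- In the stereographic coordinate based at `p₁` the form `b` becomes affine, with two zeros. -/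
theorem circleForm_eq_zero_of_three_points (ha : IsNondegenerateCircle a) {p₁ p₂ p₃ : Plane}
    (h12 : p₁ ≠ p₂) (h13 : p₁ ≠ p₃) (h23 : p₂ ≠ p₃)
    (a1 : circleForm a p₁ = 0) (a2 : circleForm a p₂ = 0) (a3 : circleForm a p₃ = 0)
    (b1 : circleForm b p₁ = 0) (b2 : circleForm b p₂ = 0) (b3 : circleForm b p₃ = 0)
    (hp : circleForm a p = 0) : circleForm b p = 0 := by
  by_cases hpp : p = p₁
  · rwa [hpp]
  set α := b ⬝ᵥ stereoConic a p₁ 0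
  set β := b ⬝ᵥ stereoConic a p₁ 1
  have affine {q : Plane} (hq : circleForm a q = 0) (hq1 : q ≠ p₁) :
      0 < a 0 ^ 2 + stereo a p₁ q ^ 2 ∧
        (a 0 ^ 2 + stereo a p₁ q ^ 2) * circleForm b q = α + stereo a p₁ q * β := by
    obtain ⟨hpos, hlift⟩ := smul_paraboloidLift_eq_conicPoint ha a1 hq hq1
    have hlead : b ⬝ᵥ stereoConic a p₁ 2 = 0 := b1
    have h := congrArg (b ⬝ᵥ ·) hlift
    simp only [dotProduct_smul, dotProduct_conicPoint, quadEval, hlead, mul_zero, add_zero] at h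
    exact ⟨hpos, h⟩
  have e2 := (affine a2 h12.symm).2
  have e3 := (affine a3 h13.symm).2
  have hne : stereo a p₁ p₂ - stereo a p₁ p₃ ≠ 0 := sub_ne_zero.2 fun h =>
    h23 (stereo_injOn ha a1 ⟨a2, h12.symm⟩ ⟨a3, h13.symm⟩ h)
  rw [b2, mul_zero] at e2
  rw [b3, mul_zero] at e3
  have hβ : β = 0 := (mul_eq_zero.1 (by linear_combination e3 - e2 :
    (stereo a p₁ p₂ - stereo a p₁ p₃) * β = 0)).resolve_left hne
  obtain ⟨hpos, h⟩ := affine hp hpp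
  refine (mul_eq_zero.1 ?_).resolve_left hpos.ne'
  linear_combination h - e2 + (stereo a p₁ p - stereo a p₁ p₂) * hβ

end Circles

section ArcParametrization

/-- The conic `q` reparametrized by `u ↦ t + s * u`. -/
def affineReparam (q : Fin 3 → Fin 4 → ℝ) (t s : ℝ) : Fin 3 → Fin 4 → ℝ :=
  ![q 0 + t • q 1 + t ^ 2 • q 2, s • q 1 + (2 * t * s) • q 2, s ^ 2 • q 2]

theorem conicPoint_affineReparam (q : Fin 3 → Fin 4 → ℝ) (t s u : ℝ) :
    conicPoint (affineReparam q t s) u = conicPoint q (t + s * u) := by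
  ext i
  simp [conicPoint, affineReparam]
  ring

/-- Over `[l, r]` the curve `Γ` runs along the circle arc with coordinates `X`, its point over `x`
having conic parameter `u x`. -/
structure ArcCoords.Parametrizes (X : ArcCoords) (Γ : ℝ → Plane) (l r : ℝ) (u : ℝ → ℝ) :
    Prop where
  nondegenerate : IsNondegenerateCircle X.form
  form_eq_zero : ∀ x ∈ Icc l r, circleForm X.form (Γ x) = 0
  continuousOn : ContinuousOn u (Icc l r)
  strictMonoOn : StrictMonoOn u (Icc l r)
  map_left : u l = 0
  map_right : u r = 1
  exists_smul_lift : ∀ x ∈ Icc l r, ∃ c : ℝ, 0 < c ∧ c • paraboloidLift (Γ x) =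
    conicPoint X.conic (u x)

/-- The centre `Γ r` of the stereographic projection has to lie beyond the parametrized part. -/
theorem ArcCoords.exists_parametrizes {Γ : ℝ → Plane} (hΓ : Continuous Γ)
    (hinj : Function.Injective Γ) {l m r : ℝ} (hlm : l < m) (hmr : m < r) {a : Fin 4 → ℝ}
    (ha : IsNondegenerateCircle a) (hzero : ∀ x ∈ Icc l r, circleForm a (Γ x) = 0) :
    ∃ (X : ArcCoords) (u : ℝ → ℝ), X.Parametrizes Γ l m u := by
  have hz : circleForm a (Γ r) = 0 := hzero r ⟨(hlm.trans hmr).le, le_rfl⟩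
  have hon {x} (hx : x ∈ Icc l m) : circleForm a (Γ x) = 0 ∧ Γ x ≠ Γ r :=
    ⟨hzero x ⟨hx.1, hx.2.trans hmr.le⟩, hinj.ne (hx.2.trans_lt hmr).ne⟩
  set t : ℝ → ℝ := fun x => stereo a (Γ r) (Γ x)
  have htinj : InjOn t (Icc l m) := fun x hx y hy hxy =>
    hinj (stereo_injOn ha hz (hon hx) (hon hy) hxy)
  have htcont : ContinuousOn t (Icc l m) := ContinuousOn.div (by fun_prop) (by fun_prop)
    fun x hx => (zero_lt_sq_add_sq_of_ne (hon hx).2).ne'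
  have hspeed : t m - t l ≠ 0 := sub_ne_zero.2 fun h =>
    hlm.ne' (htinj (right_mem_Icc.2 hlm.le) (left_mem_Icc.2 hlm.le) h)
  set u : ℝ → ℝ := fun x => (t x - t l) / (t m - t l)
  have hut (x) : t l + (t m - t l) * u x = t x := by
    rw [mul_div_cancel₀ _ hspeed]; ring
  have hul : u l = 0 := by simp [u]
  have hum : u m = 1 := div_self hspeed
  have hucont : ContinuousOn u (Icc l m) := (htcont.sub continuousOn_const).div_const _
  have huinj : InjOn u (Icc l m) := fun x hx y hy hxy =>
    htinj hx hy (by rw [← hut, ← hut y, hxy])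
  refine ⟨⟨a, affineReparam (stereoConic a (Γ r)) (t l) (t m - t l)⟩, u, ha,
    fun x hx => (hon hx).1, hucont, hucont.strictMonoOn_of_injOn_Icc hlm.le ?_ huinj, hul, hum,
    fun x hx => ⟨a 0 ^ 2 + t x ^ 2, ?_⟩⟩
  · rw [hul, hum]; exact zero_le_one
  · rw [conicPoint_affineReparam, hut]
    exact smul_paraboloidLift_eq_conicPoint ha hz (hon hx).1 (hon hx).2

end ArcParametrization

section Crossings

open Filter Topology

/-- The graph of `f` leaves the region below the graph of `g` at `x₀`. -/
structure CrossesUp (f g : ℝ → ℝ) (x₀ : ℝ) : Prop where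
  eq : f x₀ = g x₀
  lt_of_lt : ∀ x < x₀, f x < g x
  lt_of_gt : ∀ x > x₀, g x < f x

/-- The graphs of `f` and `g` meet over `x₀` only, and change sides there. -/
def Crosses (f g : ℝ → ℝ) (x₀ : ℝ) : Prop := CrossesUp f g x₀ ∨ CrossesUp g f x₀

variable {f g : ℝ → ℝ} {x₀ l r : ℝ} {h : Plane ≃ₜ Plane}

theorem Crosses.symm (hc : Crosses f g x₀) : Crosses g f x₀ := Or.symm hc

theorem Crosses.eq (hc : Crosses f g x₀) : f x₀ = g x₀ := hc.elim (·.eq) (·.eq.symm)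

theorem CrossesUp.eq_of_eq (hc : CrossesUp f g x₀) {x : ℝ} (hx : f x = g x) : x = x₀ := by
  rcases lt_trichotomy x x₀ with h | h | h
  · exact absurd hx (hc.lt_of_lt x h).ne
  · exact h
  · exact absurd hx (hc.lt_of_gt x h).ne'

theorem Crosses.eq_of_eq (hc : Crosses f g x₀) {x : ℝ} (hx : f x = g x) : x = x₀ :=
  hc.elim (·.eq_of_eq hx) (·.eq_of_eq hx.symm)

/-- The image under `h` of the graph of `f`, as a parametrized curve. -/
noncomputable def imageCurve (h : Plane ≃ₜ Plane) (f : ℝ → ℝ) (x : ℝ) : Plane := h !₂[x, f x]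

theorem continuous_imageCurve (h : Plane ≃ₜ Plane) (hf : Continuous f) :
    Continuous (imageCurve h f) := by
  refine h.continuous.comp ((PiLp.continuous_toLp 2 _).comp (continuous_pi fun i => ?_))
  fin_cases i
  · exact continuous_id
  · exact hf

theorem imageCurve_eq_imageCurve_iff {x y : ℝ} :
    imageCurve h f x = imageCurve h g y ↔ x = y ∧ f x = g y := by
  simp only [imageCurve, h.injective.eq_iff, WithLp.toLp.injEq, Matrix.vecCons_inj, and_true]

theorem imageCurve_injective (h : Plane ≃ₜ Plane) (f : ℝ → ℝ) :
    Function.Injective (imageCurve h f) := fun _ _ he => (imageCurve_eq_imageCurve_iff.1 he).1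

theorem prod_nhdsGT_le_nhds (x y : ℝ) : 𝓝 x ×ˢ 𝓝[>] y ≤ 𝓝 (x, y) :=
  (Filter.prod_mono_right _ nhdsWithin_le_nhds).trans_eq nhds_prod_eq.symm

theorem frequently_eq_zero_of_sign_change {ψ : ℝ × ℝ → ℝ} (hψ : Continuous ψ)
    (hneg : ∀ x < x₀, ψ (x, 0) < 0) (hpos : ∀ x > x₀, 0 < ψ (x, 0)) :
    ∃ᶠ z in 𝓝 x₀ ×ˢ 𝓝[>] 0, ψ z = 0 := by
  intro hev
  obtain ⟨P, hP, Q, hQ, hPQ⟩ := eventually_prod_iff.1 hev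
  obtain ⟨δ, hδ, hPδ⟩ := (nhds_basis_Icc_pos x₀).eventually_iff.1 hP
  have hleft : ∀ᶠ t in 𝓝[>] 0, ψ (x₀ - δ, t) < 0 := nhdsWithin_le_nhds <|
    (hψ.comp (Continuous.prodMk_right (x₀ - δ))).continuousAt.eventually_lt_const
      (hneg _ (sub_lt_self _ hδ))
  have hright : ∀ᶠ t in 𝓝[>] 0, 0 < ψ (x₀ + δ, t) := nhdsWithin_le_nhds <|
    (hψ.comp (Continuous.prodMk_right (x₀ + δ))).continuousAt.eventually_const_lt
      (hpos _ (lt_add_of_pos_right _ hδ))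
  obtain ⟨t, ht, hl, hr⟩ := (hQ.and (hleft.and hright)).exists
  obtain ⟨x, hx, hx0⟩ := intermediate_value_Icc (by linarith : x₀ - δ ≤ x₀ + δ)
    (hψ.comp (Continuous.prodMk_left t)).continuousOn ⟨hl.le, hr.le⟩
  exact hPQ (hPδ hx) ht hx0

theorem circleForm_add_smul (b : Fin 4 → ℝ) (p n : Plane) (t : ℝ) :
    circleForm b (p + t • n) = circleForm b p +
      t * (circleGrad b p 0 * n 0 + circleGrad b p 1 * n 1 + b 0 * t * (n 0 ^ 2 + n 1 ^ 2)) := by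
  simp [circleForm_apply, circleGrad]
  ring

theorem eventually_circleForm_lt_add_smul_grad {Γ : ℝ → Plane} (hΓ : Continuous Γ)
    {b : Fin 4 → ℝ} (hb : IsNondegenerateCircle b) (hz : circleForm b (Γ x₀) = 0) :
    ∀ᶠ z : ℝ × ℝ in 𝓝 x₀ ×ˢ 𝓝[>] 0,
      circleForm b (Γ z.1) < circleForm b (Γ z.1 + z.2 • circleGrad b (Γ x₀)) := by
  set n := circleGrad b (Γ x₀) with hn
  let slope (z : ℝ × ℝ) : ℝ := circleGrad b (Γ z.1) 0 * n 0 + circleGrad b (Γ z.1) 1 * n 1 +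
    b 0 * z.2 * (n 0 ^ 2 + n 1 ^ 2)
  have hslope : Continuous slope := by
    simp only [slope, circleGrad, PiLp.toLp_apply, Matrix.cons_val_zero, Matrix.cons_val_one]
    fun_prop
  have hslope0 : 0 < slope (x₀, 0) := by
    have := hb.grad_pos hz
    simp only [slope, ← hn] at this ⊢
    linarith
  have hev : ∀ᶠ z in 𝓝 x₀ ×ˢ 𝓝[>] 0, 0 < slope z :=
    prod_nhdsGT_le_nhds x₀ 0 (hslope.continuousAt.eventually_const_lt hslope0)
  filter_upwards [hev, tendsto_snd.eventually (eventually_mem_nhdsWithin (s := Ioi (0 : ℝ)))]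
    with z hz hz2
  rw [circleForm_add_smul]
  exact lt_add_of_pos_right _ (mul_pos hz2 hz)

/-- A crossing persists when the first curve is perturbed. -/
theorem Crosses.frequently_mem_image (hc : Crosses f g x₀) (hg : Continuous g)
    (hx : x₀ ∈ Ioo l r) {F : ℝ × ℝ → Plane} (hF : Continuous F)
    (hF0 : ∀ x, F (x, 0) = imageCurve h f x) :
    ∃ᶠ z in 𝓝 x₀ ×ˢ 𝓝[>] (0 : ℝ), F z ∈ imageCurve h g '' Ioo l r := by
  have hG : Continuous fun z => h.symm (F z) := h.symm.continuous.comp hF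
  let ψ (z : ℝ × ℝ) : ℝ := h.symm (F z) 1 - g (h.symm (F z) 0)
  have hψ : Continuous ψ := by fun_prop
  have hψ0 (x : ℝ) : ψ (x, 0) = f x - g x := by simp [ψ, hF0, imageCurve]
  have hfreq : ∃ᶠ z in 𝓝 x₀ ×ˢ 𝓝[>] 0, ψ z = 0 := by
    rcases hc with hc | hc
    · exact frequently_eq_zero_of_sign_change hψ
        (fun x hx => by simpa [hψ0] using hc.lt_of_lt x hx)
        (fun x hx => by simpa [hψ0] using hc.lt_of_gt x hx)
    · simpa using frequently_eq_zero_of_sign_change hψ.neg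
        (fun x hx => by simpa [hψ0] using hc.lt_of_lt x hx)
        (fun x hx => by simpa [hψ0] using hc.lt_of_gt x hx)
  have hcont : Continuous fun z => h.symm (F z) 0 := by fun_prop
  have hrange : ∀ᶠ z in 𝓝 x₀ ×ˢ 𝓝[>] 0, h.symm (F z) 0 ∈ Ioo l r :=
    prod_nhdsGT_le_nhds x₀ 0 (hcont.continuousAt.eventually_mem
      (isOpen_Ioo.mem_nhds (by simpa [hF0, imageCurve] using hx)))
  refine (hfreq.and_eventually hrange).mono fun z ⟨hz, hzr⟩ => ⟨_, hzr, ?_⟩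
  rw [imageCurve, ← h.eq_symm_apply]
  exact plane_ext (by simp) (by simpa using (sub_eq_zero.1 hz).symm)

/-- If the form were nonnegative along the curve of `f`, pushing this curve off the circle in the
direction of the gradient would undo the crossing. -/
theorem Crosses.exists_circleForm_neg (hc : Crosses f g x₀) (hf : Continuous f)
    (hg : Continuous g) (hx : x₀ ∈ Ioo l r) {b : Fin 4 → ℝ} (hb : IsNondegenerateCircle b)
    (hz : ∀ x ∈ Icc l r, circleForm b (imageCurve h g x) = 0) :
    ∃ x ∈ Icc l r, circleForm b (imageCurve h f x) < 0 := by
  by_contra! hnonneg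
  have hΓ := continuous_imageCurve h hf
  have hbp : circleForm b (imageCurve h f x₀) = 0 := by
    rw [imageCurve_eq_imageCurve_iff.2 ⟨rfl, hc.eq⟩]; exact hz x₀ (Ioo_subset_Icc_self hx)
  have hdomain : ∀ᶠ z in 𝓝 x₀ ×ˢ 𝓝[>] (0 : ℝ), z.1 ∈ Ioo l r :=
    tendsto_fst.eventually (isOpen_Ioo.mem_nhds hx)
  have hmeets := hc.frequently_mem_image (h := h) hg hx
    (F := fun z => imageCurve h f z.1 + z.2 • circleGrad b (imageCurve h f x₀)) (by fun_prop)
    (by simp)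
  obtain ⟨z, ⟨y, hy, hyz⟩, hzl, hlt⟩ := (hmeets.and_eventually
    (hdomain.and (eventually_circleForm_lt_add_smul_grad hΓ hb hbp))).exists
  rw [← hyz, hz y (Ioo_subset_Icc_self hy)] at hlt
  exact hlt.not_ge (hnonneg _ (Ioo_subset_Icc_self hzl))

theorem Crosses.exists_circleForm_pos (hc : Crosses f g x₀) (hf : Continuous f)
    (hg : Continuous g) (hx : x₀ ∈ Ioo l r) {b : Fin 4 → ℝ} (hb : IsNondegenerateCircle b)
    (hz : ∀ x ∈ Icc l r, circleForm b (imageCurve h g x) = 0) :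
    ∃ x ∈ Icc l r, 0 < circleForm b (imageCurve h f x) := by
  have hneg (p : Plane) : circleForm (-b) p = -circleForm b p := neg_dotProduct _ _
  have hb' : IsNondegenerateCircle (-b) := by
    simpa only [IsNondegenerateCircle, Pi.neg_apply, neg_sq, mul_neg, neg_mul, neg_neg] using hb
  obtain ⟨x, hx, hlt⟩ := hc.exists_circleForm_neg (h := h) hf hg hx hb' fun x hx => by
    rw [hneg, hz x hx, neg_zero]
  exact ⟨x, hx, neg_neg_iff_pos.1 (hneg _ ▸ hlt)⟩

end Crossings

section Realization

variable {f g : ℝ → ℝ} {x₀ l r : ℝ} {h : Plane ≃ₜ Plane} {X Y : ArcCoords} {u v : ℝ → ℝ}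

theorem ArcCoords.Parametrizes.exists_quadEval_eq {Γ : ℝ → Plane} (hX : X.Parametrizes Γ l r u)
    (Y : ArcCoords) {x : ℝ} (hx : x ∈ Icc l r) :
    ∃ c > 0, quadEval (Y.formAlong X) (u x) = c * circleForm Y.form (Γ x) := by
  obtain ⟨c, hc, he⟩ := hX.exists_smul_lift x hx
  refine ⟨c, hc, ?_⟩
  rw [circleForm, ← smul_eq_mul, ← dotProduct_smul, he, dotProduct_conicPoint]
  rfl

theorem ArcCoords.Parametrizes.mem_Ioo {Γ : ℝ → Plane} (hX : X.Parametrizes Γ l r u) {x : ℝ}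
    (hx : x ∈ Ioo l r) : u x ∈ Ioo 0 1 := by
  have hlr : l ≤ r := (hx.1.trans hx.2).le
  rw [← hX.map_left, ← hX.map_right]
  exact ⟨hX.strictMonoOn ⟨le_rfl, hlr⟩ (Ioo_subset_Icc_self hx) hx.1,
    hX.strictMonoOn (Ioo_subset_Icc_self hx) ⟨hlr, le_rfl⟩ hx.2⟩

theorem ArcCoords.Parametrizes.quadEval_eq_zero (hX : X.Parametrizes (imageCurve h f) l r u)
    (hY : Y.Parametrizes (imageCurve h g) l r v) (hx : x₀ ∈ Icc l r) (heq : f x₀ = g x₀) :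
    quadEval (Y.formAlong X) (u x₀) = 0 := by
  obtain ⟨c, -, hc⟩ := hX.exists_quadEval_eq Y hx
  rw [hc, imageCurve_eq_imageCurve_iff.2 ⟨rfl, heq⟩, hY.form_eq_zero _ hx, mul_zero]

theorem exists_second_root {q : Fin 3 → ℝ} {u : ℝ} (hu : u ∈ Ioo 0 1) (h0 : quadEval q u = 0)
    (hneg : ∃ t, quadEval q t < 0) (hpos : ∃ t, 0 < quadEval q t)
    (hends : ¬ quadEval q 0 * quadEval q 1 < 0) : ∃ t ∈ Icc 0 1, t ≠ u ∧ quadEval q t = 0 := by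
  let cofactor (t : ℝ) : ℝ := q 1 + u * q 2 + t * q 2
  have hfactor (t : ℝ) : quadEval q t = (t - u) * cofactor t := by
    simp only [quadEval, cofactor] at h0 ⊢
    linear_combination h0
  have hsign : cofactor 0 * cofactor 1 ≤ 0 := by
    rw [hfactor, hfactor, not_lt] at hends
    have : 0 < u * (1 - u) := mul_pos hu.1 (sub_pos.2 hu.2)
    nlinarith
  have hzero : (0 : ℝ) ∈ uIcc (cofactor 0) (cofactor 1) := by
    rw [mem_uIcc]
    exact (mul_nonpos_iff.1 hsign).symm.imp_right And.symm
  obtain ⟨t, ht, hct⟩ := intermediate_value_uIcc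
    (by fun_prop : Continuous cofactor).continuousOn hzero
  refine ⟨t, by rwa [uIcc_of_le zero_le_one] at ht, ?_, by rw [hfactor, hct, mul_zero]⟩
  rintro rfl
  have hsq (s : ℝ) : quadEval q s = q 2 * (s - t) ^ 2 := by
    rw [hfactor]; linear_combination (s - t) * hct
  obtain ⟨s, hs⟩ := hneg
  obtain ⟨s', hs'⟩ := hpos
  rw [hsq] at hs hs'
  exact (neg_of_mul_neg_left hs (sq_nonneg _)).not_gt (pos_of_mul_pos_left hs' (sq_nonneg _))

theorem Crosses.exists_second_point (hc : Crosses f g x₀) (hf : Continuous f)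
    (hg : Continuous g) (hx : x₀ ∈ Ioo l r) (hX : X.Parametrizes (imageCurve h f) l r u)
    (hY : Y.Parametrizes (imageCurve h g) l r v)
    (hends : ¬ quadEval (Y.formAlong X) 0 * quadEval (Y.formAlong X) 1 < 0) :
    ∃ x ∈ Icc l r, x ≠ x₀ ∧ circleForm Y.form (imageCurve h f x) = 0 := by
  have hneg : ∃ t, quadEval (Y.formAlong X) t < 0 := by
    obtain ⟨x, hx, hlt⟩ := hc.exists_circleForm_neg hf hg hx hY.nondegenerate hY.form_eq_zero
    obtain ⟨c, hc, he⟩ := hX.exists_quadEval_eq Y hx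
    exact ⟨u x, he ▸ mul_neg_of_pos_of_neg hc hlt⟩
  have hpos : ∃ t, 0 < quadEval (Y.formAlong X) t := by
    obtain ⟨x, hx, hlt⟩ := hc.exists_circleForm_pos hf hg hx hY.nondegenerate hY.form_eq_zero
    obtain ⟨c, hc, he⟩ := hX.exists_quadEval_eq Y hx
    exact ⟨u x, he ▸ mul_pos hc hlt⟩
  obtain ⟨t, ht, hne, ht0⟩ := exists_second_root (hX.mem_Ioo hx)
    (hX.quadEval_eq_zero hY (Ioo_subset_Icc_self hx) hc.eq) hneg hpos hends
  rw [← hX.map_left, ← hX.map_right] at ht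
  obtain ⟨x, hx', rfl⟩ := intermediate_value_Icc (hx.1.trans hx.2).le hX.continuousOn ht
  obtain ⟨c, hc, he⟩ := hX.exists_quadEval_eq Y hx'
  exact ⟨x, hx', fun h => hne (by rw [h]), (mul_eq_zero.1 (he.symm.trans ht0)).resolve_left hc.ne'⟩

/-- If neither form changed sign, the two circles would have three common points. -/
theorem Crosses.meets (hc : Crosses f g x₀) (hf : Continuous f) (hg : Continuous g)
    (hx : x₀ ∈ Ioo l r) (hX : X.Parametrizes (imageCurve h f) l r u)
    (hY : Y.Parametrizes (imageCurve h g) l r v) : X.Meets Y (u x₀) (v x₀) where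
  left_mem := hX.mem_Ioo hx
  right_mem := hY.mem_Ioo hx
  left_root := hX.quadEval_eq_zero hY (Ioo_subset_Icc_self hx) hc.eq
  right_root := hY.quadEval_eq_zero hX (Ioo_subset_Icc_self hx) hc.eq.symm
  sign_change := by
    by_contra! hends
    have hx' := Ioo_subset_Icc_self hx
    obtain ⟨x, hxI, hxne, hx0⟩ := hc.exists_second_point hf hg hx hX hY hends.1.not_gt
    obtain ⟨y, hyI, hyne, hy0⟩ := hc.symm.exists_second_point hg hf hx hY hX hends.2.not_gt
    have hxy : imageCurve h f x ≠ imageCurve h g y := fun he => by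
      obtain ⟨rfl, he⟩ := imageCurve_eq_imageCurve_iff.1 he
      exact hxne (hc.eq_of_eq he)
    have hY0 : circleForm Y.form (imageCurve h f x₀) = 0 := by
      rw [imageCurve_eq_imageCurve_iff.2 ⟨rfl, hc.eq⟩]; exact hY.form_eq_zero _ hx'
    obtain ⟨z, hz, hlt⟩ := hc.exists_circleForm_neg hf hg hx hY.nondegenerate hY.form_eq_zero
    refine hlt.ne (circleForm_eq_zero_of_three_points hX.nondegenerate
      (fun he => hxne (imageCurve_injective h f he).symm)
      (fun he => hyne (imageCurve_eq_imageCurve_iff.1 he).1.symm) hxy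
      (hX.form_eq_zero _ hx') (hX.form_eq_zero _ hxI) hy0
      hY0 hx0 (hY.form_eq_zero _ hyI) (hX.form_eq_zero z hz))

theorem OrderedBy.map {b : Bool} {x y : ℝ} {s : Set ℝ} (ho : OrderedBy b x y)
    (hu : StrictMonoOn u s) (hx : x ∈ s) (hy : y ∈ s) : OrderedBy b (u x) (u y) := by
  cases b
  · exact hu hy hx ho
  · exact hu hx hy ho

theorem formTriangle_of_crosses {fA fV fH : ℝ → ℝ} (cA : Continuous fA) (cV : Continuous fV)
    (cH : Continuous fH) {xAV xAH xVH : ℝ} (hAV : xAV ∈ Ioo l r) (hAH : xAH ∈ Ioo l r)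
    (hVH : xVH ∈ Ioo l r) (crAV : Crosses fA fV xAV) (crAH : Crosses fA fH xAH)
    {A V H : ArcCoords} {a v w : ℝ → ℝ} (hA : A.Parametrizes (imageCurve h fA) l r a)
    (hV : V.Parametrizes (imageCurve h fV) l r v) (hH : H.Parametrizes (imageCurve h fH) l r w)
    {b : Bool} (ho : OrderedBy b xAH xAV) (ho' : OrderedBy b xAV xVH) :
    ArcCoords.FormTriangle b A V H ![v xVH, w xVH] :=
  have iAV := Ioo_subset_Icc_self hAV
  have iAH := Ioo_subset_Icc_self hAH
  have iVH := Ioo_subset_Icc_self hVH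
  ⟨hV.mem_Ioo hVH, hH.mem_Ioo hVH, a xAV, v xAV, a xAH, w xAH,
    crAV.meets cA cV hAV hA hV, crAH.meets cA cH hAH hA hH, ho.map hA.strictMonoOn iAH iAV,
    ho'.map hV.strictMonoOn iAV iVH, (ho.trans ho').map hH.strictMonoOn iAH iVH⟩

end Realization

section Pieces

/-- The pieces allowed in `HasPieceDecomposition`. -/
def IsPiece (P : Set Plane) : Prop := IsArc P ∨ IsSegment P ∨ IsRay P

theorem exists_circleForm_eq_zero_on_line {c u : Plane} (hu : u ≠ 0) :
    ∃ a, IsNondegenerateCircle a ∧ ∀ t : ℝ, circleForm a (c + t • u) = 0 := by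
  refine ⟨![0, -u 1, u 0, u 1 * c 0 - u 0 * c 1], ?_, fun t => ?_⟩
  · have h := zero_lt_sq_add_sq_of_ne hu
    simp only [PiLp.zero_apply, sub_zero] at h
    simpa [IsNondegenerateCircle, add_comm] using h
  · simp [circleForm_apply]
    ring

theorem exists_circleForm_eq_zero_on_sphere (c : Plane) {r : ℝ} (hr : 0 < r) :
    ∃ a, IsNondegenerateCircle a ∧ ∀ z ∈ Metric.sphere c r, circleForm a z = 0 := by
  refine ⟨![1, -2 * c 0, -2 * c 1, c 0 ^ 2 + c 1 ^ 2 - r ^ 2], ?_, fun z hz => ?_⟩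
  · have := pow_pos hr 2
    simp only [IsNondegenerateCircle, Matrix.cons_val]
    linarith
  · rw [mem_sphere_iff_norm, EuclideanSpace.norm_eq,
      Real.sqrt_eq_iff_eq_sq (by positivity) hr.le] at hz
    simp only [PiLp.sub_apply, Real.norm_eq_abs, sq_abs, Fin.sum_univ_two] at hz
    simp only [circleForm_apply, Matrix.cons_val]
    linarith

theorem IsPiece.exists_circleForm_eq_zero {P : Set Plane} (hP : IsPiece P) (hnt : P.Nontrivial) :
    ∃ a, IsNondegenerateCircle a ∧ ∀ z ∈ P, circleForm a z = 0 := by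
  rcases hP with ⟨c, r, hr, hs, -⟩ | ⟨c, d, rfl⟩ | ⟨c, u, hu, rfl⟩
  · obtain ⟨a, ha, hz⟩ := exists_circleForm_eq_zero_on_sphere c hr
    exact ⟨a, ha, fun z h => hz z (hs h)⟩
  · have hcd : d - c ≠ 0 := by
      rintro h
      rw [sub_eq_zero.1 h, segment_same] at hnt
      exact not_nontrivial_singleton hnt
    obtain ⟨a, ha, hz⟩ := exists_circleForm_eq_zero_on_line hcd (c := c)
    rw [segment_eq_image']
    exact ⟨a, ha, by rintro _ ⟨t, -, rfl⟩; exact hz t⟩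
  · obtain ⟨a, ha, hz⟩ := exists_circleForm_eq_zero_on_line hu (c := c)
    exact ⟨a, ha, by rintro _ ⟨t, -, rfl⟩; exact hz t⟩

theorem IsPiece.isPreconnected {P : Set Plane} (hP : IsPiece P) : IsPreconnected P := by
  rcases hP with ⟨c, r, -, -, h⟩ | ⟨c, d, rfl⟩ | ⟨c, u, -, rfl⟩
  · exact h.isPreconnected
  · exact (convex_segment c d).isPreconnected
  · have himage : {p | ∃ t : ℝ, 0 ≤ t ∧ p = c + t • u} = (fun t : ℝ => c + t • u) '' Ici 0 := by
      ext p
      simp only [mem_ofPred_eq, mem_image, mem_Ici, eq_comm]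
    rw [himage]
    exact isPreconnected_Ici.image _ (by fun_prop)

end Pieces

section Graphs

variable {f g : ℝ → ℝ} {x₀ : ℝ}

/-- The graph of `f`, as a subset of the plane. -/
def planeGraph (f : ℝ → ℝ) : Set Plane := {p | p 1 = f (p 0)}

theorem mem_planeGraph {p : Plane} : p ∈ planeGraph f ↔ p 1 = f (p 0) := Iff.rfl

theorem mk_mem_planeGraph {x y : ℝ} : (!₂[x, y] : Plane) ∈ planeGraph f ↔ y = f x := Iff.rfl

theorem range_imageCurve (h : Plane ≃ₜ Plane) (f : ℝ → ℝ) :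
    range (imageCurve h f) = h '' planeGraph f := by
  refine Subset.antisymm (range_subset_iff.2 fun x => ⟨_, mk_mem_planeGraph.2 rfl, rfl⟩) ?_
  rintro _ ⟨p, hp, rfl⟩
  exact ⟨p 0, congrArg h (plane_ext rfl (mem_planeGraph.1 hp).symm)⟩

theorem continuous_shear (hf : Continuous f) :
    Continuous fun p : Plane => (!₂[p 0, p 1 + f (p 0)] : Plane) := by
  refine (PiLp.continuous_toLp 2 _).comp (continuous_pi fun i => ?_)
  fin_cases i
  · exact PiLp.continuous_apply 2 _ 0
  · exact (PiLp.continuous_apply 2 _ 1).add (hf.comp (PiLp.continuous_apply 2 _ 0))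

/-- The vertical shear taking the horizontal axis to the graph of `f`. -/
def shear (f : ℝ → ℝ) (hf : Continuous f) : Plane ≃ₜ Plane where
  toFun p := !₂[p 0, p 1 + f (p 0)]
  invFun p := !₂[p 0, p 1 + -f (p 0)]
  left_inv p := plane_ext (by simp) (by simp)
  right_inv p := plane_ext (by simp) (by simp)
  continuous_toFun := continuous_shear hf
  continuous_invFun := continuous_shear hf.neg

theorem isPseudoline_planeGraph (hf : Continuous f) : IsPseudoline (planeGraph f) := by
  refine ⟨shear f hf, {p | ∃ t : ℝ, p = 0 + t • (!₂[1, 0] : Plane)}, ⟨0, !₂[1, 0], ?_, rfl⟩, ?_⟩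
  · exact fun h => one_ne_zero (congrArg (fun p : Plane => p 0) h)
  · ext p
    constructor
    · intro hp
      exact ⟨!₂[p 0, 0], ⟨p 0, plane_ext (by simp) (by simp)⟩,
        plane_ext (by simp [shear]) (by simpa [shear] using hp.symm)⟩
    · rintro ⟨_, ⟨t, rfl⟩, rfl⟩
      simp [shear, planeGraph]

theorem isPreconnected_setOf_sub_mem (hg : Continuous g) {S : Set ℝ} (hS : IsPreconnected S) :
    IsPreconnected {p : Plane | p 1 - g (p 0) ∈ S} := by
  have hcont : Continuous fun z : ℝ × ℝ => shear g hg !₂[z.1, z.2] := by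
    refine (shear g hg).continuous.comp ((PiLp.continuous_toLp 2 _).comp
      (continuous_pi fun i => ?_))
    fin_cases i
    · exact continuous_fst
    · exact continuous_snd
  convert (isPreconnected_univ.prod hS).image _ hcont.continuousOn using 1
  ext p
  constructor
  · exact fun hp => ⟨(p 0, p 1 - g (p 0)), ⟨trivial, hp⟩,
      plane_ext (by simp [shear]) (by simp [shear])⟩
  · rintro ⟨⟨x, y⟩, ⟨-, hy⟩, rfl⟩
    simpa [shear] using hy

theorem Crosses.exists_lt (hc : Crosses f g x₀) : ∃ x, f x < g x :=
  hc.elim (fun h => ⟨x₀ - 1, h.lt_of_lt _ (sub_one_lt x₀)⟩)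
    fun h => ⟨x₀ + 1, h.lt_of_gt _ (lt_add_one x₀)⟩

theorem Crosses.inter_component_nonempty (hc : Crosses f g x₀) (hg : Continuous g) {p : Plane}
    (hp : p ∈ (planeGraph g)ᶜ) :
    (planeGraph f ∩ connectedComponentIn (planeGraph g)ᶜ p).Nonempty := by
  have key (S : Set ℝ) (hS : IsPreconnected S) (h0 : (0 : ℝ) ∉ S) (hpS : p 1 - g (p 0) ∈ S)
      (x : ℝ) (hx : f x - g x ∈ S) :
      (planeGraph f ∩ connectedComponentIn (planeGraph g)ᶜ p).Nonempty := by
    have hsub : {q : Plane | q 1 - g (q 0) ∈ S} ⊆ (planeGraph g)ᶜ := fun q hq hqg =>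
      h0 (sub_eq_zero.2 (mem_planeGraph.1 hqg) ▸ hq)
    exact ⟨!₂[x, f x], mk_mem_planeGraph.2 rfl,
      (isPreconnected_setOf_sub_mem hg hS).subset_connectedComponentIn hpS hsub hx⟩
  obtain ⟨x, hx⟩ := hc.exists_lt
  obtain ⟨y, hy⟩ := hc.symm.exists_lt
  rcases lt_or_gt_of_ne (sub_ne_zero.2 (mt mem_planeGraph.2 hp)) with h | h
  · exact key (Iio 0) isPreconnected_Iio self_notMem_Iio h x (sub_neg.2 hx)
  · exact key (Ioi 0) isPreconnected_Ioi self_notMem_Ioi h y (sub_pos.2 hy)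

theorem Crosses.planeGraph_inter (hc : Crosses f g x₀) :
    planeGraph f ∩ planeGraph g = {!₂[x₀, f x₀]} := by
  ext p
  simp only [mem_inter_iff, mem_planeGraph, mem_singleton_iff]
  refine ⟨fun ⟨hf, hg⟩ => ?_, ?_⟩
  · have hx : p 0 = x₀ := hc.eq_of_eq (hf.symm.trans hg)
    exact plane_ext hx (hx ▸ hf)
  · rintro rfl
    exact ⟨rfl, hc.eq⟩

theorem Crosses.planeGraph_ne (hc : Crosses f g x₀) : planeGraph f ≠ planeGraph g := by
  obtain ⟨x, hx⟩ := hc.exists_lt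
  intro he
  have hmem : (!₂[x, f x] : Plane) ∈ planeGraph g := he ▸ mk_mem_planeGraph.2 rfl
  exact hx.ne (mk_mem_planeGraph.1 hmem)

theorem isArrangement_planeGraph {n : ℕ} {F : Fin n → ℝ → ℝ} (hF : ∀ i, Continuous (F i))
    (hc : ∀ i j, i ≠ j → ∃ x₀, Crosses (F i) (F j) x₀) :
    IsArrangement fun i => planeGraph (F i) := by
  refine ⟨⟨fun i j hij => ?_, fun i => isPseudoline_planeGraph (hF i), fun i j hij => ?_,
    fun i j hij p hp => ?_⟩, fun i j hij => ?_⟩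
  · by_contra hne
    obtain ⟨_, hx⟩ := hc i j hne
    exact hx.planeGraph_ne hij
  all_goals obtain ⟨x₀, hx⟩ := hc i j hij
  · exact hx.planeGraph_inter ▸ subsingleton_singleton
  · exact ⟨hp, fun q hq => hx.inter_component_nonempty (hF j) hq,
      fun q hq => hx.symm.inter_component_nonempty (hF i) hq⟩
  · exact hx.planeGraph_inter ▸ singleton_nonempty _

theorem exists_small_shifts_without_triple_points {ι : Type*} [Finite ι] (F : ι → ℝ → ℝ) {η : ℝ}
    (hη : 0 < η)
    (hF : ∀ i j, i ≠ j → ∀ c, |c| ≤ 2 * η → {x | F i x = F j x + c}.Finite) :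
    ∃ ε : ι → ℝ, (∀ i, |ε i| ≤ η) ∧ ∀ x i j k, F i x + ε i = F j x + ε j →
      F j x + ε j = F k x + ε k → i = j ∨ i = k ∨ j = k := by
  classical
  have := Fintype.ofFinite ι
  suffices H : ∀ S : Finset ι, ∃ ε : ι → ℝ, (∀ i, |ε i| ≤ η) ∧ ∀ x, ∀ i ∈ S, ∀ j ∈ S, ∀ k ∈ S,
      F i x + ε i = F j x + ε j → F j x + ε j = F k x + ε k → i = j ∨ i = k ∨ j = k by
    obtain ⟨ε, hε, h⟩ := H Finset.univ
    exact ⟨ε, hε, fun x i j k => h x i (Finset.mem_univ i) j (Finset.mem_univ j) k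
      (Finset.mem_univ k)⟩
  intro S
  induction S using Finset.induction_on with
  | empty => exact ⟨0, fun i => by simpa using hη.le, by simp⟩
  | insert a S haS ih =>
    obtain ⟨ε, hε, hS⟩ := ih
    have hfin : (⋃ p : ι × ι, ⋃ _ : p.1 ≠ p.2, (fun x => F p.1 x + ε p.1 - F a x) ''
        {x | F p.1 x = F p.2 x + (ε p.2 - ε p.1)}).Finite :=
      Set.finite_iUnion fun p => Set.finite_iUnion fun hp => (hF p.1 p.2 hp _ (by
        linarith [abs_sub (ε p.2) (ε p.1), hε p.1, hε p.2])).image _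
    obtain ⟨e, he, he_new⟩ := ((Ioo_infinite hη).sdiff hfin).nonempty
    have hnew : ∀ i j x, i ≠ j → F i x + ε i = F j x + ε j → F i x + ε i ≠ F a x + e := by
      intro i j x hij hx hxe
      refine he_new (mem_iUnion₂.2 ⟨(i, j), hij, x, ?_, ?_⟩)
      · exact (by linarith : F i x = F j x + (ε j - ε i))
      · exact (by linarith : F i x + ε i - F a x = e)
    refine ⟨Function.update ε a e, fun i => ?_, fun x i hi j hj k hk hij hjk => ?_⟩
    · rcases eq_or_ne i a with rfl | hi
      · simpa [abs_of_pos he.1] using he.2.le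
      · simpa [hi] using hε i
    · grind [Function.update_apply]

end Graphs

section BentLines

variable {f g : ℝ → ℝ} {x₀ : ℝ} {k N T m s s' t t' : ℕ} {e e' : ℝ} {β : ℕ → ℕ → ℕ → Bool}

theorem CrossesUp.lt_iff (hc : CrossesUp f g x₀) {x : ℝ} : f x < g x ↔ x < x₀ := by
  refine ⟨fun h => ?_, hc.lt_of_lt x⟩
  by_contra! hx
  rcases hx.eq_or_lt with rfl | hx
  exacts [h.ne hc.eq, h.not_gt (hc.lt_of_gt x hx)]

theorem CrossesUp.gt_iff (hc : CrossesUp f g x₀) {x : ℝ} : g x < f x ↔ x₀ < x := by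
  refine ⟨fun h => ?_, hc.lt_of_gt x⟩
  by_contra! hx
  rcases hx.eq_or_lt with rfl | hx
  exacts [h.ne' hc.eq, h.not_gt (hc.lt_of_lt x hx)]

theorem orderedBy_of_crossesUp {A V H : ℝ → ℝ} {xAV xAH xVH : ℝ} {b : Bool}
    (hAV : CrossesUp A V xAV) (hAH : CrossesUp A H xAH) (hHV : CrossesUp H V xVH)
    (ho : OrderedBy b (V xVH) (A xVH)) : OrderedBy b xAH xAV ∧ OrderedBy b xAV xVH := by
  cases b
  · have hx : xVH < xAV := hAV.lt_iff.1 ho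
    exact ⟨hAH.lt_iff.1 (hAV.eq ▸ hHV.lt_of_gt _ hx), hx⟩
  · have hx : xAV < xVH := hAV.gt_iff.1 ho
    exact ⟨hAH.gt_iff.1 (hAV.eq ▸ hHV.lt_of_lt _ hx), hx⟩

theorem exists_crossesUp_of_linear_growth (hf : Continuous f) (hg : Continuous g) {c : ℝ}
    (hc : 0 < c) (h : ∀ x y, x ≤ y → c * (y - x) ≤ (f y - g y) - (f x - g x)) :
    ∃ x₀, CrossesUp f g x₀ := by
  set r := |f 0 - g 0| / c with hr
  have hr0 : 0 ≤ r := by positivity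
  have hcr : c * r = |f 0 - g 0| := by rw [hr]; field_simp
  have hleft : f (-r) - g (-r) ≤ 0 := by linarith [h (-r) 0 (by linarith), le_abs_self (f 0 - g 0)]
  have hright : 0 ≤ f r - g r := by linarith [h 0 r hr0, neg_abs_le (f 0 - g 0)]
  obtain ⟨x₀, -, hx₀⟩ := intermediate_value_Icc (by linarith) (hf.sub hg).continuousOn
    ⟨hleft, hright⟩
  have hx₀ : f x₀ - g x₀ = 0 := hx₀
  refine ⟨x₀, sub_eq_zero.1 hx₀, fun x hx => ?_, fun x hx => ?_⟩
  · linarith [h x x₀ hx.le, mul_pos hc (sub_pos.2 hx)]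
  · linarith [h x₀ x hx.le, mul_pos hc (sub_pos.2 hx)]

/-- Admissible perturbations of the lines: small, with small Lipschitz constant, and constant
on the left. -/
structure IsBend (φ : ℝ → ℝ) : Prop where
  lipschitz : ∀ x y, |φ x - φ y| ≤ 1 / 8 * |x - y|
  abs_le : ∀ x, |φ x| ≤ 1 / 8
  eq_of_le : ∀ x ≤ -1, φ x = φ (-1)

theorem IsBend.continuous (hf : IsBend f) : Continuous f :=
  (LipschitzWith.of_dist_le_mul (K := 1 / 8) fun x y => by
    simpa [Real.dist_eq] using hf.lipschitz x y).continuous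

/-- The line of slope `s` and intercept `t`, bent on the left of `-1` so that any two of them
cross. -/
noncomputable def baseLine (T s t : ℕ) (x : ℝ) : ℝ := s * x + t * (1 + min 0 (x + 1) / (4 * T))

theorem baseLine_of_ge {x : ℝ} (hx : -1 ≤ x) : baseLine T s t x = s * x + t := by
  rw [baseLine, min_eq_left (by linarith), zero_div, add_zero, mul_one]

theorem continuous_baseLine (T s t : ℕ) : Continuous (baseLine T s t) := by
  unfold baseLine
  fun_prop

theorem baseLine_growth (hs : s < s') (ht : t < T) {x y : ℝ} (hxy : x ≤ y) :
    3 / 4 * (y - x) ≤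
      (baseLine T s' t' y - baseLine T s t y) - (baseLine T s' t' x - baseLine T s t x) := by
  set μ := min 0 (y + 1) - min 0 (x + 1) with hμ
  have hμ0 : 0 ≤ μ := sub_nonneg.2 (min_le_min le_rfl (by linarith))
  have hμ1 : μ ≤ y - x := by grind
  have hT : (0 : ℝ) < T := by exact_mod_cast (Nat.zero_le t).trans_lt ht
  have hslope : y - x ≤ (s' - s) * (y - x) := by
    have hs' : (s : ℝ) + 1 ≤ s' := by exact_mod_cast hs
    exact le_mul_of_one_le_left (sub_nonneg.2 hxy) (by linarith)
  have hbend : t / (4 * T) * μ ≤ 1 / 4 * (y - x) := by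
    have ht' : (t : ℝ) ≤ T := by exact_mod_cast ht.le
    refine mul_le_mul ?_ hμ1 hμ0 (by norm_num)
    rw [div_le_iff₀ (by positivity)]
    linarith
  have hbend' : 0 ≤ t' / (4 * T) * μ := by positivity
  calc 3 / 4 * (y - x) ≤ (s' - s) * (y - x) + t' / (4 * T) * μ - t / (4 * T) * μ := by linarith
    _ = _ := by rw [hμ]; unfold baseLine; ring

theorem exists_crossesUp_of_slope_lt (hf : IsBend f) (hg : IsBend g) (hs : s < s') (ht : t < T) :
    ∃ x₀, CrossesUp (fun x => baseLine T s' t' x + g x) (fun x => baseLine T s t x + f x) x₀ := by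
  refine exists_crossesUp_of_linear_growth ((continuous_baseLine T s' t').add hg.continuous)
    ((continuous_baseLine T s t).add hf.continuous) one_half_pos fun x y hxy => ?_
  have hf' := abs_le.1 (hf.lipschitz y x)
  have hg' := abs_le.1 (hg.lipschitz y x)
  rw [abs_of_nonneg (sub_nonneg.2 hxy)] at hf' hg'
  linarith [baseLine_growth hs ht (t' := t') hxy]

theorem exists_crossesUp_of_intercept_lt (hf : IsBend f) (hg : IsBend g) (ht : t < t')
    (ht' : t' < T) :
    ∃ x₀, CrossesUp (fun x => baseLine T s t' x + g x) (fun x => baseLine T s t x + f x) x₀ := by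
  have hT : (0 : ℝ) < T := by exact_mod_cast (Nat.zero_le t').trans_lt ht'
  have hD : (1 : ℝ) ≤ t' - t := by
    have : (t : ℝ) + 1 ≤ t' := by exact_mod_cast ht
    linarith
  set ρ : ℝ := (t' - t) / (4 * T) with hρ
  have hρ0 : 0 < ρ := by positivity
  set gap : ℝ := t' - t + (g (-1) - f (-1)) with hgap
  have hgap0 : 0 < gap := by linarith [abs_le.1 (hf.abs_le (-1)), abs_le.1 (hg.abs_le (-1))]
  have hleft : ∀ x ≤ -1, baseLine T s t' x + g x - (baseLine T s t x + f x) =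
      ρ * (x - (-1 - gap / ρ)) := by
    intro x hx
    rw [hf.eq_of_le x hx, hg.eq_of_le x hx, baseLine, baseLine, min_eq_right (by linarith),
      show ρ * (x - (-1 - gap / ρ)) = ρ * (x + 1) + gap by field_simp; ring, hρ, hgap]
    ring
  have hright : ∀ x ≥ -1, baseLine T s t x + f x < baseLine T s t' x + g x := by
    intro x hx
    rw [baseLine_of_ge hx, baseLine_of_ge hx]
    linarith [abs_le.1 (hf.abs_le x), abs_le.1 (hg.abs_le x)]
  have hroot : -1 - gap / ρ < -1 := sub_lt_self _ (by positivity)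
  refine ⟨-1 - gap / ρ, sub_eq_zero.1 ?_, fun x hx => sub_neg.1 ?_, fun x hx => ?_⟩
  · rw [hleft _ hroot.le, sub_self, mul_zero]
  · rw [hleft x (hx.trans hroot).le]
    exact mul_neg_of_pos_of_neg hρ0 (sub_neg.2 hx)
  · rcases le_total x (-1) with h | h
    · rw [← sub_pos, hleft x h]
      exact mul_pos hρ0 (sub_pos.2 hx)
    · exact hright x h

/-- The tent function of height `1` with support `[-1/2, 1/2]`. -/
def tent (x : ℝ) : ℝ := max 0 (1 - 2 * |x|)

theorem tent_nonneg (x : ℝ) : 0 ≤ tent x := le_max_left _ _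

theorem tent_le_one (x : ℝ) : tent x ≤ 1 := max_le zero_le_one (by linarith [abs_nonneg x])

theorem tent_eq_zero {x : ℝ} (hx : 1 / 2 ≤ |x|) : tent x = 0 := max_eq_left (by linarith)

theorem half_le_tent {x : ℝ} (hx : |x| ≤ 1 / 4) : 1 / 2 ≤ tent x :=
  le_max_of_le_right (by linarith)

theorem abs_tent_sub_tent_le (x y : ℝ) : |tent x - tent y| ≤ 2 * |x - y| := by
  refine (abs_max_sub_max_le_max _ _ _ _).trans (max_le (by simp) ?_)
  calc |1 - 2 * |x| - (1 - 2 * |y|)| = 2 * |(|x| - |y|)| := by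
        rw [← abs_neg, show -(1 - 2 * |x| - (1 - 2 * |y|)) = 2 * (|x| - |y|) by ring, abs_mul,
          abs_two]
    _ ≤ 2 * |x - y| := mul_le_mul_of_nonneg_left (abs_abs_sub_abs_le x y) zero_le_two

/-- The height of each of `N` bumps, small enough for their sum to be an admissible bend. -/
noncomputable def bumpHeight (N : ℕ) : ℝ := 1 / (16 * (N + 1))

theorem bumpHeight_pos (N : ℕ) : 0 < bumpHeight N := by unfold bumpHeight; positivity

theorem bumpHeight_mul_le (N : ℕ) : bumpHeight N * N ≤ 1 / 16 := by
  rw [bumpHeight, one_div_mul_eq_div, div_le_iff₀ (by positivity)]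
  linarith

theorem bumpHeight_le (N : ℕ) : bumpHeight N ≤ 1 / 16 :=
  one_div_le_one_div_of_le (by norm_num) (by linarith [N.cast_nonneg (α := ℝ)])

/-- A bump at each `m < N`, upward or downward according to `b m`. -/
noncomputable def bumps (N : ℕ) (b : ℕ → Bool) (x : ℝ) : ℝ :=
  bumpHeight N * ∑ m ∈ Finset.range N, (bif b m then 1 else -1) * tent (x - m)

theorem abs_bumpHeight_mul_sum_le {a : ℕ → ℝ} {c : ℝ} (ha : ∀ m, |a m| ≤ c) :
    |bumpHeight N * ∑ m ∈ Finset.range N, a m| ≤ 1 / 16 * c := by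
  have hsum : |∑ m ∈ Finset.range N, a m| ≤ N * c :=
    (Finset.abs_sum_le_sum_abs _ _).trans
      ((Finset.sum_le_card_nsmul _ _ c fun m _ => ha m).trans (by simp))
  rw [abs_mul, abs_of_pos (bumpHeight_pos N)]
  calc bumpHeight N * |∑ m ∈ Finset.range N, a m| ≤ bumpHeight N * (N * c) :=
        mul_le_mul_of_nonneg_left hsum (bumpHeight_pos N).le
    _ = bumpHeight N * N * c := by ring
    _ ≤ 1 / 16 * c :=
        mul_le_mul_of_nonneg_right (bumpHeight_mul_le N) ((abs_nonneg _).trans (ha 0))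

theorem abs_bif_mul (b : Bool) (x : ℝ) : |(bif b then 1 else -1) * x| = |x| := by
  cases b <;> simp

theorem abs_bumps_le (N : ℕ) (b : ℕ → Bool) (x : ℝ) : |bumps N b x| ≤ 1 / 16 := by
  refine (abs_bumpHeight_mul_sum_le (c := 1) fun m => ?_).trans_eq (mul_one _)
  rw [abs_bif_mul, abs_of_nonneg (tent_nonneg _)]
  exact tent_le_one _

theorem abs_bumps_sub_bumps_le (N : ℕ) (b : ℕ → Bool) (x y : ℝ) :
    |bumps N b x - bumps N b y| ≤ 1 / 8 * |x - y| := by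
  rw [bumps, bumps, ← mul_sub, ← Finset.sum_sub_distrib]
  refine (abs_bumpHeight_mul_sum_le (c := 2 * |x - y|) fun m => ?_).trans_eq (by ring)
  rw [← mul_sub, abs_bif_mul]
  simpa using abs_tent_sub_tent_le (x - m) (y - m)

theorem bumps_eq_zero (N : ℕ) (b : ℕ → Bool) {x : ℝ} (hx : x ≤ -1) : bumps N b x = 0 := by
  rw [bumps, Finset.sum_eq_zero fun m _ => ?_, mul_zero]
  have : (0 : ℝ) ≤ m := Nat.cast_nonneg m
  rw [tent_eq_zero, mul_zero]
  rw [abs_of_nonpos] <;> linarith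

theorem bumps_near (b : ℕ → Bool) (hm : m < N) {x : ℝ} (hx : |x - m| ≤ 1 / 4) :
    bumps N b x = bumpHeight N * ((bif b m then 1 else -1) * tent (x - m)) := by
  rw [bumps, Finset.sum_eq_single_of_mem m (Finset.mem_range.2 hm)]
  intro j _ hj
  have hdist : (1 : ℝ) ≤ |(m : ℝ) - j| := by
    exact_mod_cast Int.one_le_abs (sub_ne_zero.2 (Nat.cast_injective.ne hj.symm) : (m : ℤ) - j ≠ 0)
  have htri : |(m : ℝ) - j| ≤ |x - m| + |x - j| := abs_sub_comm x m ▸ abs_sub_le (m : ℝ) x j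
  rw [tent_eq_zero (by linarith), mul_zero]

/-- The line of slope `s` and intercept `t`; if `s ≥ 2` it is pushed up or down near each
`m < N` according to `β m s t`. -/
noncomputable def bentLine (N T : ℕ) (β : ℕ → ℕ → ℕ → Bool) (s t : ℕ) (x : ℝ) : ℝ :=
  baseLine T s t x + if s < 2 then 0 else bumps N (β · s t) x

theorem isBend_ite_bumps_add (N s t : ℕ) (β : ℕ → ℕ → ℕ → Bool) (he : |e| ≤ 1 / 16) :
    IsBend fun x => (if s < 2 then 0 else bumps N (β · s t) x) + e := by
  split_ifs
  · exact ⟨fun _ _ => by simp, fun _ => by rw [zero_add]; linarith, fun _ _ => rfl⟩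
  · refine ⟨fun x y => ?_, fun x => ?_, fun x hx => ?_⟩
    · rw [add_sub_add_right_eq_sub]
      exact abs_bumps_sub_bumps_le N _ x y
    · linarith [abs_add_le (bumps N (β · s t) x) e, abs_bumps_le N (β · s t) x]
    · rw [bumps_eq_zero N _ hx, bumps_eq_zero N _ le_rfl]

theorem continuous_bentLine (N T s t : ℕ) (β : ℕ → ℕ → ℕ → Bool) :
    Continuous (bentLine N T β s t) :=
  (continuous_baseLine T s t).add <| by
    simpa using (isBend_ite_bumps_add N s t β (e := 0) (by norm_num)).continuous

theorem abs_bentLine_sub_le (N T s t : ℕ) (β : ℕ → ℕ → ℕ → Bool) {x : ℝ} (hx : -1 ≤ x) :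
    |bentLine N T β s t x - (s * x + t)| ≤ 1 / 16 := by
  rw [bentLine, baseLine_of_ge hx, add_sub_cancel_left]
  split_ifs
  · norm_num
  · exact abs_bumps_le N _ x

theorem bentLine_of_lt_two (N T : ℕ) (β : ℕ → ℕ → ℕ → Bool) (hs : s < 2) {x : ℝ} (hx : -1 ≤ x) :
    bentLine N T β s t x = s * x + t := by
  rw [bentLine, baseLine_of_ge hx, if_pos hs, add_zero]

theorem bentLine_near (T : ℕ) (β : ℕ → ℕ → ℕ → Bool) (hs : 2 ≤ s) (hm : m < N) {x : ℝ}
    (hx : |x - m| ≤ 1 / 4) :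
    bentLine N T β s t x =
      s * x + t + bumpHeight N * ((bif β m s t then 1 else -1) * tent (x - m)) := by
  have : (0 : ℝ) ≤ m := Nat.cast_nonneg m
  rw [bentLine, baseLine_of_ge (by linarith [(abs_le.1 hx).1]), if_neg hs.not_gt,
    bumps_near _ hm hx]

theorem exists_crossesUp_bentLine_of_slope_lt (N : ℕ) (β : ℕ → ℕ → ℕ → Bool) (t' : ℕ)
    (he : |e| ≤ 1 / 16) (he' : |e'| ≤ 1 / 16) (hs : s < s') (ht : t < T) :
    ∃ x₀, CrossesUp (fun x => bentLine N T β s' t' x + e') (fun x => bentLine N T β s t x + e)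
      x₀ := by
  simpa only [bentLine, add_assoc] using exists_crossesUp_of_slope_lt
    (isBend_ite_bumps_add N s t β he) (isBend_ite_bumps_add N s' t' β he') hs ht

theorem exists_crossesUp_bentLine_of_intercept_lt (N s : ℕ) (β : ℕ → ℕ → ℕ → Bool)
    (he : |e| ≤ 1 / 16) (he' : |e'| ≤ 1 / 16) (ht : t < t') (ht' : t' < T) :
    ∃ x₀, CrossesUp (fun x => bentLine N T β s t' x + e') (fun x => bentLine N T β s t x + e)
      x₀ := by
  simpa only [bentLine, add_assoc] using exists_crossesUp_of_intercept_lt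
    (isBend_ite_bumps_add N s t β he) (isBend_ite_bumps_add N s t' β he') ht ht'

theorem exists_crosses_bentLine (N : ℕ) (β : ℕ → ℕ → ℕ → Bool) {i j : Fin (k + 2) × Fin T}
    (hij : i ≠ j) (he : |e| ≤ 1 / 16) (he' : |e'| ≤ 1 / 16) :
    ∃ x₀, Crosses (fun x => bentLine N T β i.1 i.2 x + e)
      (fun x => bentLine N T β j.1 j.2 x + e') x₀ := by
  obtain ⟨s, t⟩ := i
  obtain ⟨s', t'⟩ := j
  rcases lt_trichotomy s s' with hs | rfl | hs
  · exact (exists_crossesUp_bentLine_of_slope_lt N β t' he he' hs t.2).imp fun _ => Or.inr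
  · rcases lt_or_gt_of_ne (fun ht => hij (by rw [ht]) : t ≠ t') with ht | ht
    · exact (exists_crossesUp_bentLine_of_intercept_lt N s β he he' ht t'.2).imp fun _ => Or.inr
    · exact (exists_crossesUp_bentLine_of_intercept_lt N s β he' he ht t.2).imp fun _ => Or.inl
  · exact (exists_crossesUp_bentLine_of_slope_lt N β t he' he hs t'.2).imp fun _ => Or.inl

/-- The neighbourhood of `m` in which the lines concurrent above `m` are rearranged. -/
def column (m : ℕ) : Set ℝ := Ioo (m - 1 / 4) (m + 1 / 4)

theorem mem_column_of_crossesUp (hs : s' < s) (hm : s * m + t = s' * m + t')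
    (he : |e| ≤ 1 / 64) (he' : |e'| ≤ 1 / 64)
    (hc : CrossesUp (fun x => bentLine N T β s t x + e) (fun x => bentLine N T β s' t' x + e') x₀) :
    x₀ ∈ column m := by
  have hm0 : (0 : ℝ) ≤ m := Nat.cast_nonneg m
  have hmR : (s : ℝ) * m + t = s' * m + t' := by exact_mod_cast hm
  have hsR : (s' : ℝ) + 1 ≤ s := by exact_mod_cast hs
  rw [abs_le] at he he'
  refine ⟨hc.lt_iff.1 ?_, hc.gt_iff.1 ?_⟩
  · have hA := abs_le.1 (abs_bentLine_sub_le N T s t β (by linarith : -1 ≤ (m : ℝ) - 1 / 4))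
    have hB := abs_le.1 (abs_bentLine_sub_le N T s' t' β (by linarith : -1 ≤ (m : ℝ) - 1 / 4))
    linarith
  · have hA := abs_le.1 (abs_bentLine_sub_le N T s t β (by linarith : -1 ≤ (m : ℝ) + 1 / 4))
    have hB := abs_le.1 (abs_bentLine_sub_le N T s' t' β (by linarith : -1 ≤ (m : ℝ) + 1 / 4))
    linarith

/-- The size of the generic shifts, negligible against the bumps even after multiplication
by a slope. -/
noncomputable def shiftBound (k N : ℕ) : ℝ := bumpHeight N / (8 * (k + 3))

theorem shiftBound_pos (k N : ℕ) : 0 < shiftBound k N :=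
  div_pos (bumpHeight_pos N) (by positivity)

theorem shiftBound_le (k N : ℕ) : shiftBound k N ≤ 1 / 64 := by
  rw [shiftBound, div_le_iff₀ (by positivity)]
  linarith [bumpHeight_le N, k.cast_nonneg (α := ℝ)]

/-- The curve `A` crosses `V` and `H` over points of `I` whose order, relative to the
crossing `xVH` of `V` and `H`, is given by `b`. -/
def FormsTriangle (b : Bool) (A V H : ℝ → ℝ) (xVH : ℝ) (I : Set ℝ) : Prop :=
  ∃ xAV ∈ I, ∃ xAH ∈ I, Crosses A V xAV ∧ Crosses A H xAH ∧
    OrderedBy b xAH xAV ∧ OrderedBy b xAV xVH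

theorem orderedBy_bentLine {eA d x v : ℝ} (hs : 2 ≤ s) (hsk : s < k + 2) (hm : m < N)
    (hv : (s : ℝ) * m + t = v) (heA : |eA| ≤ shiftBound k N) (hd : |d| ≤ shiftBound k N)
    (hx : |x - m| ≤ 2 * shiftBound k N) :
    OrderedBy (β m s t) (v + d) (bentLine N T β s t x + eA) := by
  have hxm : |x - m| ≤ 1 / 4 := hx.trans (by linarith [shiftBound_le k N])
  have hsR : (s : ℝ) ≤ k + 1 := by exact_mod_cast Nat.le_of_lt_succ hsk
  have hdrift : |(s : ℝ) * (x - m)| ≤ (k + 1) * (2 * shiftBound k N) := by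
    rw [abs_mul, Nat.abs_cast]
    exact mul_le_mul hsR hx (abs_nonneg _) (by positivity)
  have hheight : bumpHeight N = shiftBound k N * (8 * (k + 3)) :=
    (div_mul_cancel₀ _ (by positivity)).symm
  have hbump : bumpHeight N * (1 / 2) ≤ bumpHeight N * tent (x - m) :=
    mul_le_mul_of_nonneg_left (half_le_tent hxm) (bumpHeight_pos N).le
  have hpos := mul_nonneg (shiftBound_pos k N).le (k.cast_nonneg (α := ℝ))
  have hpos' := shiftBound_pos k N
  rw [abs_le] at heA hd hdrift
  rw [bentLine_near T β hs hm hxm]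
  cases β m s t
  · change _ < _
    rw [cond_false]
    linarith
  · change _ < _
    rw [cond_true]
    linarith

theorem exists_formsTriangle_bentLine {ε : Fin (k + 2) × Fin T → ℝ}
    (hε : ∀ i, |ε i| ≤ shiftBound k N) (hm : m < N) {tV tH : Fin T} (hVH : (tV : ℕ) = m + tH) :
    ∃ xVH ∈ column m, ∀ (s : Fin (k + 2)) (t : Fin T), 2 ≤ (s : ℕ) → (tV : ℕ) = s * m + t →
      FormsTriangle (β m s t) (fun x => bentLine N T β s t x + ε (s, t))
        (fun x => bentLine N T β 0 tV x + ε (0, tV)) (fun x => bentLine N T β 1 tH x + ε (1, tH))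
        xVH (column m) := by
  have hε64 i : |ε i| ≤ 1 / 64 := (hε i).trans (shiftBound_le k N)
  have hε16 i : |ε i| ≤ 1 / 16 := (hε64 i).trans (by norm_num)
  obtain ⟨xVH, hHV⟩ := exists_crossesUp_bentLine_of_slope_lt N β tH (hε16 (0, tV)) (hε16 (1, tH))
    zero_lt_one tV.2
  have hcol := mem_column_of_crossesUp (m := m) zero_lt_one (by omega) (hε64 _) (hε64 _) hHV
  refine ⟨xVH, hcol, fun s t hs hst => ?_⟩
  obtain ⟨xAV, hAV⟩ := exists_crossesUp_bentLine_of_slope_lt N β t (hε16 (0, tV)) (hε16 (s, t))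
    (by omega : 0 < (s : ℕ)) tV.2
  obtain ⟨xAH, hAH⟩ := exists_crossesUp_bentLine_of_slope_lt N β t (hε16 (1, tH)) (hε16 (s, t))
    (by omega : 1 < (s : ℕ)) tH.2
  have hleft : -1 ≤ xVH := by linarith [hcol.1, m.cast_nonneg (α := ℝ)]
  have hx : xVH - m = ε (0, tV) - ε (1, tH) := by
    have heq := hHV.eq
    simp only [bentLine_of_lt_two N T β zero_lt_two hleft,
      bentLine_of_lt_two N T β one_lt_two hleft, hVH, Nat.cast_add, Nat.cast_zero,
      Nat.cast_one] at heq
    linarith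
  have ho : OrderedBy (β m s t) (bentLine N T β 0 tV xVH + ε (0, tV))
      (bentLine N T β s t xVH + ε (s, t)) := by
    rw [bentLine_of_lt_two N T β zero_lt_two hleft, Nat.cast_zero, zero_mul, zero_add]
    refine orderedBy_bentLine hs s.2 hm (by exact_mod_cast hst.symm) (hε _) (hε _) ?_
    rw [hx]
    linarith [abs_sub (ε (0, tV)) (ε (1, tH)), hε (0, tV), hε (1, tH)]
  obtain ⟨h₁, h₂⟩ := orderedBy_of_crossesUp hAV hAH hHV ho
  exact ⟨xAV, mem_column_of_crossesUp (by omega) (by omega) (hε64 _) (hε64 _) hAV, xAH,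
    mem_column_of_crossesUp (by omega) (by omega) (hε64 _) (hε64 _) hAH, .inl hAV, .inl hAH, h₁, h₂⟩

theorem exists_simple_curves_with_orientations (k N T : ℕ) (β : ℕ → ℕ → ℕ → Bool) :
    ∃ F : Fin (k + 2) × Fin T → ℝ → ℝ, (∀ i, Continuous (F i)) ∧
      (∀ i j, i ≠ j → ∃ x₀, Crosses (F i) (F j) x₀) ∧
      (∀ x i j l, F i x = F j x → F j x = F l x → i = j ∨ i = l ∨ j = l) ∧
      ∀ m < N, ∀ tV tH : Fin T, (tV : ℕ) = m + tH → ∃ xVH ∈ column m,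
        ∀ (s : Fin (k + 2)) (t : Fin T), 2 ≤ (s : ℕ) → (tV : ℕ) = s * m + t →
          FormsTriangle (β m s t) (F (s, t)) (F (0, tV)) (F (1, tH)) xVH (column m) := by
  have hη : 2 * shiftBound k N ≤ 1 / 16 := by linarith [shiftBound_le k N]
  obtain ⟨ε, hε, hsimple⟩ := exists_small_shifts_without_triple_points
    (fun i : Fin (k + 2) × Fin T => bentLine N T β i.1 i.2) (shiftBound_pos k N)
    fun i j hij c hc => by
      obtain ⟨x₀, hx₀⟩ := exists_crosses_bentLine N β hij (e := 0) (by norm_num) (hc.trans hη)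
      exact (finite_singleton x₀).subset fun x hx => hx₀.eq_of_eq ((add_zero _).trans hx)
  have hε16 i : |ε i| ≤ 1 / 16 := (hε i).trans (by linarith [shiftBound_pos k N])
  exact ⟨fun i x => bentLine N T β i.1 i.2 x + ε i,
    fun i => (continuous_bentLine N T i.1 i.2 β).add continuous_const,
    fun i j hij => exists_crosses_bentLine N β hij (hε16 i) (hε16 j), hsimple,
    fun m hm tV tH hVH => exists_formsTriangle_bentLine hε hm hVH⟩

end BentLines

section Windows

/-- The `a`-th block of `k` consecutive columns on the `x`-axis. -/
def block (k a : ℕ) : Set ℝ := Icc (k * a - 1 / 4) (k * a + k - 1 / 4)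

/-- Over the block `a`, the image under `h` of the graph of `f` lies on no single circle or line. -/
def IsBent (k : ℕ) (h : Plane ≃ₜ Plane) (f : ℝ → ℝ) (a : ℕ) : Prop :=
  ∀ c, IsNondegenerateCircle c → ∃ x ∈ block k a, circleForm c (imageCurve h f x) ≠ 0

theorem ordConnected_preimage_imageCurve (h : Plane ≃ₜ Plane) (f : ℝ → ℝ) {P : Set Plane}
    (hP : IsPreconnected P) (hsub : P ⊆ range (imageCurve h f)) :
    (imageCurve h f ⁻¹' P).OrdConnected := by
  have hfirst : ∀ x, h.symm (imageCurve h f x) 0 = x := fun x => by simp [imageCurve]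
  have hpre : imageCurve h f ⁻¹' P = (fun p => h.symm p 0) '' P := by
    ext x
    refine ⟨fun hx => ⟨_, hx, hfirst x⟩, ?_⟩
    rintro ⟨p, hp, hpx⟩
    obtain ⟨y, rfl⟩ := hsub hp
    rw [mem_preimage, ← hpx]
    simpa only [hfirst] using hp
  have hcont : Continuous fun p : Plane => h.symm p 0 := by fun_prop
  exact hpre ▸ (hP.image _ hcont.continuousOn).ordConnected

theorem IsPiece.not_isBent {k : ℕ} (hk : 0 < k) {h : Plane ≃ₜ Plane} {f : ℝ → ℝ} {P : Set Plane}
    (hP : IsPiece P) (hsub : P ⊆ range (imageCurve h f)) {a a' : ℕ} (haa' : a < a')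
    (ha : imageCurve h f (k * a - 1 / 4) ∈ P) (ha' : imageCurve h f (k * a' - 1 / 4) ∈ P) :
    ¬ IsBent k h f a := by
  have hk' : (0 : ℝ) < k := by exact_mod_cast hk
  have hstep : (k : ℝ) * a + k ≤ k * a' := by exact_mod_cast Nat.mul_le_mul_left k haa'
  have hne : imageCurve h f (k * a - 1 / 4) ≠ imageCurve h f (k * a' - 1 / 4) := fun he => by
    linarith [imageCurve_injective h f he]
  obtain ⟨c, hc, hzero⟩ := hP.exists_circleForm_eq_zero ⟨_, ha, _, ha', hne⟩
  intro hbent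
  obtain ⟨x, hx, hx0⟩ := hbent c hc
  have hblock : Icc ((k : ℝ) * a - 1 / 4) (k * a' - 1 / 4) ⊆ imageCurve h f ⁻¹' P :=
    (ordConnected_preimage_imageCurve h f hP.isPreconnected hsub).out ha ha'
  exact hx0 (hzero _ (hblock ⟨hx.1, by linarith [hx.2]⟩))

theorem card_le_of_isBent {k : ℕ} (hk : 0 < k) {h : Plane ≃ₜ Plane} {f : ℝ → ℝ} {m : ℕ}
    (hd : HasPieceDecomposition (h '' planeGraph f) m) {B : Finset ℕ}
    (hB : ∀ a ∈ B, IsBent k h f a) : B.card ≤ m := by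
  obtain ⟨P, hP, hunion⟩ := hd
  rw [← range_imageCurve] at hunion
  have hsub : ∀ q, P q ⊆ range (imageCurve h f) := fun q => hunion ▸ subset_iUnion P q
  have hcover : ∀ a : ℕ, ∃ q, imageCurve h f (k * a - 1 / 4) ∈ P q := fun a =>
    mem_iUnion.1 (hunion ▸ mem_range_self _)
  choose q hq using hcover
  have hinj : Set.InjOn q B := by
    intro a ha a' ha' he
    rcases lt_trichotomy a a' with hlt | heq | hlt
    · exact absurd (hB a ha) (IsPiece.not_isBent hk (hP _) (hsub _) hlt (hq a) (he ▸ hq a'))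
    · exact heq
    · exact absurd (hB a' ha') (IsPiece.not_isBent hk (hP _) (hsub _) hlt (hq a') (he ▸ hq a))
  simpa using Finset.card_le_card_of_injOn q (t := Finset.univ) (by simp) hinj

/-- A point of the `k × k²` grid of triple points inside a window. -/
abbrev GridPoint (k : ℕ) := Fin k × Fin (k ^ 2)

/-- Slope and intercept of a line of a window, in coordinates local to the window: `(s, t)` stands
for `y = s x + t - k²`. -/
abbrev LocalLine (k : ℕ) := Fin (k + 2) × Fin (2 * k ^ 2)

theorem mul_le_sq_of_lt {k s x : ℕ} (hs : s < k + 2) (hx : x < k) : s * x ≤ k ^ 2 := by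
  obtain ⟨j, rfl⟩ : ∃ j, k = j + 1 := ⟨k - 1, by omega⟩
  calc s * x ≤ (j + 2) * j := Nat.mul_le_mul (by omega) (by omega)
    _ ≤ (j + 1) ^ 2 := by nlinarith

/-- The line of slope `s` of a window through a grid point. -/
def lineThrough {k : ℕ} (s : Fin (k + 2)) (g : GridPoint k) : LocalLine k :=
  (s, ⟨g.2 + k ^ 2 - s * g.1, by omega⟩)

theorem lineThrough_add {k : ℕ} (s : Fin (k + 2)) (g : GridPoint k) :
    ((lineThrough s g).2 : ℕ) + s * g.1 = g.2 + k ^ 2 := by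
  have := mul_le_sq_of_lt s.2 g.1.2
  simp only [lineThrough]
  omega

theorem window_shift_le {k a b M s : ℕ} (ha : a < M) (hs : s < k + 2) (hk : 0 < k) :
    s * (k * a) + k ^ 2 ≤ 2 * k ^ 2 * (b + M) :=
  calc s * (k * a) + k ^ 2 ≤ 2 * k * (k * a) + 2 * k ^ 2 :=
        Nat.add_le_add (Nat.mul_le_mul_right _ (by omega)) (by omega)
    _ = 2 * k ^ 2 * (a + 1) := by ring
    _ ≤ 2 * k ^ 2 * (b + M) := Nat.mul_le_mul_left _ (by omega)

theorem window_intercept_lt {k b M t : ℕ} (hb : b < M) (ht : t < 2 * k ^ 2) :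
    2 * k ^ 2 * (b + M) + t < 4 * k ^ 2 * M :=
  calc 2 * k ^ 2 * (b + M) + t < 2 * k ^ 2 * (b + M) + 2 * k ^ 2 := by gcongr
    _ = 2 * k ^ 2 * (b + M + 1) := by ring
    _ ≤ 2 * k ^ 2 * (2 * M) := by gcongr; omega
    _ = 4 * k ^ 2 * M := by ring

/-- The line of the whole arrangement that is the line `p` of the window `(a, b)`. The window has
its origin at `(k a, 2 k² (b + M))`. -/
def windowLine {k M : ℕ} (a b : Fin M) (p : LocalLine k) : Fin (k + 2) × Fin (4 * k ^ 2 * M) :=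
  (p.1, ⟨2 * k ^ 2 * (b + M) + p.2 - (p.1 * (k * a) + k ^ 2),
    (Nat.sub_le _ _).trans_lt (window_intercept_lt b.2 p.2.2)⟩)

theorem LocalLine.pos {k : ℕ} (p : LocalLine k) : 0 < k :=
  Nat.pos_of_ne_zero (by rintro rfl; exact absurd p.2.2 (by simp))

theorem windowLine_add {k M : ℕ} (a b : Fin M) (p : LocalLine k) :
    ((windowLine a b p).2 : ℕ) + (p.1 * (k * a) + k ^ 2) = 2 * k ^ 2 * (b + M) + p.2 := by
  have := window_shift_le (b := b) a.2 p.1.2 (LocalLine.pos p)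
  simp only [windowLine]
  omega

theorem windowLine_lineThrough {k M : ℕ} (a b : Fin M) (s : Fin (k + 2)) (g : GridPoint k) :
    (s : ℕ) * (k * a + g.1) + (windowLine a b (lineThrough s g)).2 = 2 * k ^ 2 * (b + M) + g.2 := by
  have hw := windowLine_add a b (lineThrough s g)
  have hl := lineThrough_add s g
  have hs : (lineThrough s g).1 = s := rfl
  rw [hs] at hw
  linarith

theorem eq_of_windowLine_eq {k M : ℕ} {a b b' : Fin M} {p p' : LocalLine k}
    (h : windowLine a b p = windowLine a b' p') : b = b' := by
  have hdiv : ∀ (c : Fin M) (r : LocalLine k),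
      (2 * k ^ 2 * ((c : ℕ) + M) + r.2) / (2 * k ^ 2) = c + M := fun c r => by
    have hr := r.2.2
    rw [Nat.mul_add_div (by omega), Nat.div_eq_of_lt hr, add_zero]
  have hs : p.1 = p'.1 := (Prod.ext_iff.1 h).1
  have heq : 2 * k ^ 2 * ((b : ℕ) + M) + p.2 = 2 * k ^ 2 * (b' + M) + p'.2 := by
    rw [← windowLine_add a b p, ← windowLine_add a b' p', h, hs]
  have := (hdiv b p).symm.trans (heq ▸ hdiv b' p')
  exact Fin.ext (by omega)

/-- The orientation bits that repeat `β` in every window; the bit at abscissa `m` on the line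
`y = s x + t` is read off from the position of that point relative to its window. -/
noncomputable def periodicBits {k : ℕ} (β : GridPoint k × Fin k → Bool) (m s t : ℕ) : Bool :=
  Function.extend (fun g : GridPoint k × Fin k => ((g.1.1 : ℕ), (g.1.2 : ℕ), (g.2 : ℕ) + 2)) β
    (fun _ => false) (m % k, (s * m + t) % (2 * k ^ 2), s)

theorem periodicBits_windowLine {k M : ℕ} (β : GridPoint k × Fin k → Bool) (a b : Fin M)
    (g : GridPoint k × Fin k) :
    periodicBits β (k * a + g.1.1) (g.2.succ.succ : Fin (k + 2))
      (windowLine a b (lineThrough g.2.succ.succ g.1)).2 = β g := by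
  have hinj : Function.Injective
      fun g : GridPoint k × Fin k => ((g.1.1 : ℕ), (g.1.2 : ℕ), (g.2 : ℕ) + 2) := by
    rintro ⟨⟨x, y⟩, z⟩ ⟨⟨x', y'⟩, z'⟩ he
    simpa [Fin.ext_iff, and_assoc] using he
  have hy : (g.1.2 : ℕ) < 2 * k ^ 2 := by omega
  rw [periodicBits, windowLine_lineThrough, Nat.mul_add_mod, Nat.mul_add_mod,
    Nat.mod_eq_of_lt g.1.1.2, Nat.mod_eq_of_lt hy]
  exact hinj.extend_apply β _ g

/-- The local lines cannot be drawn as arcs of circles or lines so that each line of slope at least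
`2` through a grid point forms, with the lines of slopes `0` and `1` through it, a triangle of the
orientation prescribed by `β`. -/
def IsUnrealizable {k : ℕ} (β : GridPoint k × Fin k → Bool) : Prop :=
  ∀ (X : LocalLine k → ArcCoords) (w : GridPoint k → Fin 2 → ℝ), ∃ g,
    ¬ ArcCoords.FormTriangle (β g) (X (lineThrough g.2.succ.succ g.1)) (X (lineThrough 0 g.1))
      (X (lineThrough 1 g.1)) (w g.1)

theorem exists_isUnrealizable : ∃ k, ∃ β : GridPoint k × Fin k → Bool, IsUnrealizable β := by
  refine ⟨4096, exists_orientation_not_formTriangle (e := 99) _ _ _ _ ?_ ?_⟩ <;>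
    simp only [GridPoint, LocalLine, Fintype.card_prod, Fintype.card_fin] <;> norm_num

theorem column_subset_Ioo (k a : ℕ) (x : Fin k) :
    column (k * a + x) ⊆ Ioo ((k : ℝ) * a - 1 / 4) (k * a + k - 1 / 2) := by
  have hx : ((x : ℕ) : ℝ) + 1 ≤ k := by exact_mod_cast x.2
  have : (0 : ℝ) ≤ (x : ℕ) := Nat.cast_nonneg _
  rw [column]
  push_cast
  exact Ioo_subset_Ioo (by linarith) (by linarith)

theorem exists_parametrizes_of_not_isBent {k a : ℕ} (hk : 0 < k) (h : Plane ≃ₜ Plane) {f : ℝ → ℝ}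
    (hf : Continuous f) (hbent : ¬ IsBent k h f a) : ∃ (X : ArcCoords) (u : ℝ → ℝ),
      X.Parametrizes (imageCurve h f) (k * a - 1 / 4) (k * a + k - 1 / 2) u := by
  have hk1 : (1 : ℝ) ≤ k := by exact_mod_cast hk
  simp only [IsBent, not_forall, not_exists, not_and, ne_eq, not_not] at hbent
  obtain ⟨c, hc, hzero⟩ := hbent
  exact ArcCoords.exists_parametrizes (continuous_imageCurve h hf) (imageCurve_injective h f)
    (by linarith) (by linarith) hc hzero

theorem exists_windowLine_isBent {k M : ℕ} {β : GridPoint k × Fin k → Bool} (hβ : IsUnrealizable β)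
    {F : Fin (k + 2) × Fin (4 * k ^ 2 * M) → ℝ → ℝ} (hF : ∀ i, Continuous (F i))
    (hloc : ∀ m < k * M, ∀ tV tH : Fin (4 * k ^ 2 * M), (tV : ℕ) = m + tH → ∃ xVH ∈ column m,
      ∀ (s : Fin (k + 2)) (t : Fin (4 * k ^ 2 * M)), 2 ≤ (s : ℕ) → (tV : ℕ) = s * m + t →
        FormsTriangle (periodicBits β m s t) (F (s, t)) (F (0, tV)) (F (1, tH)) xVH (column m))
    (h : Plane ≃ₜ Plane) (a b : Fin M) :
    ∃ p : LocalLine k, IsBent k h (F (windowLine a b p)) a := by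
  by_contra! hstraight
  choose X u hX using fun p => exists_parametrizes_of_not_isBent (LocalLine.pos p) h (hF _)
    (hstraight p)
  have hm (g : GridPoint k) : k * (a : ℕ) + g.1 < k * M :=
    calc k * (a : ℕ) + g.1 < k * a + k := by have := g.1.2; omega
      _ = k * (a + 1) := by ring
      _ ≤ k * M := Nat.mul_le_mul_left k a.2
  have hV (g : GridPoint k) :
      ((windowLine a b (lineThrough 0 g)).2 : ℕ) = 2 * k ^ 2 * (b + M) + g.2 := by
    simpa using windowLine_lineThrough a b 0 g
  have hH (g : GridPoint k) : ((windowLine a b (lineThrough 0 g)).2 : ℕ) =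
      k * a + g.1 + (windowLine a b (lineThrough 1 g)).2 := by
    simpa [hV] using (windowLine_lineThrough a b 1 g).symm
  choose xVH hxVH htri using fun g => hloc _ (hm g) _ _ (hH g)
  obtain ⟨g, hg⟩ := hβ X fun g => ![u (lineThrough 0 g) (xVH g), u (lineThrough 1 g) (xVH g)]
  have hA : ((windowLine a b (lineThrough 0 g.1)).2 : ℕ) =
      (g.2.succ.succ : Fin (k + 2)) * (k * a + g.1.1) +
        (windowLine a b (lineThrough g.2.succ.succ g.1)).2 :=
    (hV g.1).trans (windowLine_lineThrough a b _ g.1).symm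
  obtain ⟨xAV, hxAV, xAH, hxAH, crAV, crAH, ho, ho'⟩ := htri g.1 _ _ (by simp) hA
  rw [periodicBits_windowLine] at ho ho'
  have hcol := column_subset_Ioo k a g.1.1
  exact hg (formTriangle_of_crosses (hF _) (hF _) (hF _) (hcol hxAV) (hcol hxAH)
    (hcol (hxVH g.1)) crAV crAH (hX _) (hX _) (hX _) ho ho')

theorem isSimple_planeGraph {n : ℕ} {F : Fin n → ℝ → ℝ}
    (hF : ∀ x i j l, F i x = F j x → F j x = F l x → i = j ∨ i = l ∨ j = l) :
    IsSimple fun i => planeGraph (F i) := fun p i j l hi hj hl => by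
  rw [mem_planeGraph] at hi hj hl
  exact hF (p 0) i j l (hi.symm.trans hj) (hj.symm.trans hl)

/-- Windows over the same block have no line in common, so a curve that is the bent curve of many
windows is bent over as many blocks. -/
theorem exists_linear_lower_bound {k M : ℕ} (hk : 0 < k) (hM : 0 < M) {h : Plane ≃ₜ Plane}
    {F : Fin (k + 2) × Fin (4 * k ^ 2 * M) → ℝ → ℝ}
    (hbent : ∀ a b : Fin M, ∃ p : LocalLine k, IsBent k h (F (windowLine a b p)) a) :
    ∃ i, ∀ m, HasPieceDecomposition (h '' planeGraph (F i)) m →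
      (M : ℝ) / ((k + 2) * (4 * k ^ 2)) ≤ m := by
  choose p hp using hbent
  let line (w : Fin M × Fin M) : Fin (k + 2) × Fin (4 * k ^ 2 * M) := windowLine w.1 w.2 (p w.1 w.2)
  have : Nonempty (Fin (k + 2) × Fin (4 * k ^ 2 * M)) := ⟨(0, ⟨0, by positivity⟩)⟩
  obtain ⟨i, -, hi⟩ := Finset.exists_le_card_fiber_of_nsmul_le_card_of_maps_to
    (s := Finset.univ) (t := Finset.univ) (f := line) (b := (M : ℝ) / ((k + 2) * (4 * k ^ 2)))
    (fun w _ => Finset.mem_univ _) Finset.univ_nonempty (by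
      simp only [Finset.card_univ, Fintype.card_prod, Fintype.card_fin, nsmul_eq_mul]
      push_cast
      exact le_of_eq (by field_simp))
  refine ⟨i, fun m hm => hi.trans ?_⟩
  set W := Finset.univ.filter fun w => line w = i
  have hline : ∀ w ∈ W, line w = i := fun w hw => (Finset.mem_filter.1 hw).2
  have hinj : Set.InjOn (fun w : Fin M × Fin M => (w.1 : ℕ)) W := by
    rintro ⟨a, b⟩ hw ⟨a', b'⟩ hw' he
    obtain rfl : a = a' := Fin.ext he
    exact congrArg (Prod.mk a) (eq_of_windowLine_eq ((hline _ hw).trans (hline _ hw').symm))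
  rw [← Finset.card_image_of_injOn hinj, Nat.cast_le]
  refine card_le_of_isBent hk hm fun a ha => ?_
  obtain ⟨w, hw, rfl⟩ := Finset.mem_image.1 ha
  exact hline w hw ▸ hp w.1 w.2

theorem exists_arrangement_of_isUnrealizable {k M : ℕ} (hk : 0 < k) (hM : 0 < M)
    {β : GridPoint k × Fin k → Bool} (hβ : IsUnrealizable β) :
    ∃ L : Fin ((k + 2) * (4 * k ^ 2 * M)) → Set Plane, IsArrangement L ∧ IsSimple L ∧
      ∀ h : Plane ≃ₜ Plane, ∃ i, ∀ m, HasPieceDecomposition (h '' L i) m →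
        (M : ℝ) / ((k + 2) * (4 * k ^ 2)) ≤ m := by
  obtain ⟨F, hF, hcross, hsimple, hloc⟩ :=
    exists_simple_curves_with_orientations k (k * M) (4 * k ^ 2 * M) (periodicBits β)
  have hinj := (finProdFinEquiv (m := k + 2) (n := 4 * k ^ 2 * M)).symm.injective
  refine ⟨fun i => planeGraph (F (finProdFinEquiv.symm i)),
    isArrangement_planeGraph (fun i => hF _) fun i j hij => hcross _ _ (hinj.ne hij),
    isSimple_planeGraph fun x i j l hij hjl => ?_, fun h => ?_⟩
  · simpa only [hinj.eq_iff] using hsimple x _ _ _ hij hjl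
  · obtain ⟨i, hi⟩ := exists_linear_lower_bound hk hM (exists_windowLine_isBent hβ hF hloc h)
    exact ⟨finProdFinEquiv i, by simpa only [Equiv.symm_apply_apply] using hi⟩

theorem IsUnrealizable.pos {k : ℕ} {β : GridPoint k × Fin k → Bool} (hβ : IsUnrealizable β) :
    0 < k :=
  have ⟨g, _⟩ := hβ (fun _ => ⟨0, 0⟩) 0
  g.2.pos

end Windows

theorem exists_arrangement_requiring_linear_arcs_general :
    ∃ c : ℝ, 0 < c ∧
      {n : ℕ | ∃ L : Fin n → Set Plane,
        IsArrangement L ∧ IsSimple L ∧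
        ∀ h : Plane ≃ₜ Plane,
          ∃ i, ∀ m, HasPieceDecomposition (h '' L i) m → c * n ≤ (m : ℝ)}.Infinite := by
  obtain ⟨k, β, hβ⟩ := exists_isUnrealizable
  have hk : 0 < k := hβ.pos
  have : (0 : ℝ) < k := by exact_mod_cast hk
  refine ⟨1 / (((k : ℝ) + 2) * (4 * k ^ 2)) ^ 2, by positivity,
    infinite_of_injective_forall_mem (f := fun M : ℕ => (k + 2) * (4 * k ^ 2 * (M + 1)))
      (fun M M' hMM' => ?_) fun M => ?_⟩
  · simpa [hk.ne'] using hMM'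
  · obtain ⟨L, hL, hsimple, hbound⟩ := exists_arrangement_of_isUnrealizable hk M.succ_pos hβ
    refine ⟨L, hL, hsimple, fun h => (hbound h).imp fun i hi m hm => (le_of_eq ?_).trans (hi m hm)⟩
    push_cast
    field_simp

/-- Theorem 4. There exist simple arrangements of `n` pseudolines
that, when represented by smooth piecewise-circular curves, require some curve to
consist of `Ω(n)` arcs. -/
theorem exists_arrangement_requiring_linear_arcs :
    ∃ c : ℝ, 0 < c ∧
      {n : ℕ | ∃ L : Fin n → Set Plane,
        IsArrangement L ∧ IsSimple L ∧
        ∀ h : Plane ≃ₜ Plane,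
          (∀ i, IsC1Curve (h '' L i) ∧ ∃ m, HasPieceDecomposition (h '' L i) m) →
          ∃ i, ∀ m, HasPieceDecomposition (h '' L i) m → c * n ≤ (m : ℝ)}.Infinite := by
  obtain ⟨c, hc, hinf⟩ := exists_arrangement_requiring_linear_arcs_general
  exact ⟨c, hc, hinf.mono (by rintro n ⟨L, hL, hs, hb⟩; exact ⟨L, hL, hs, fun h _ => hb h⟩)⟩
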